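/- arXiv:1205.5059 — 6 statements merged into one kernel-verified Lean document; each statement's English description precedes it below -/
import Mathlib

section
/- Let n ≥ 1 and let f_1, …, f_n ∈ L¹([0,1]) be real-valued. Then there exists a real-valued function g ∈ C_c^∞((0,1); ℝ) such that ∫_0^1 f_j(x) e^{i g(x)} dx = 0 for all 1 ≤ j ≤ n. -/
open MeasureTheory Complex

/-!
The zero is found by perturbing a highly oscillating phase. Passing to a basis of the span of the
`f j` in `L¹(0,1)`, the functions may be taken to be linearly independent, say `v 1, …, v m`;
then there are test functions `a l` dual to them, `∫ v j * a l = δ_jl` (`exists_dual`).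

Let `ψ` be `x ↦ -2πkx`, cut off near the endpoints. By the Riemann–Lebesgue lemma both
`∫ u e^{iψ}` and `∫ u e^{2iψ}` tend to `0` for every integrable `u` as `k → ∞`
(`exists_oscillating`). So `e^{iψ}` is an approximate solution. For `z ∈ ℂ^m` put
`w = ∑ z l * a l` and `p_z = 2 Im (w e^{-iψ})`. Then `i e^{iψ} p_z = w - conj w * e^{2iψ}`, so
the derivative at `z = 0` of `F z j = ∫ v j e^{i(ψ + p_z)}` is the identity up to an error that
vanishes as `k → ∞`, while the second order remainder is bounded independently of `k`. Hence on a
ball of radius `r` independent of `k` the map `F - id` is `1/2`-Lipschitz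
(`approximatesLinearOn_phase`), and `F` attains the value `0` there as soon as `‖F 0‖ ≤ r / 2`
(`exists_phase_of_dual`).
-/

open Filter Topology

/-! ### Test functions -/

/-- The space `C_c^∞((0,1); ℝ)`, as a subspace of all functions `ℝ → ℝ`. -/
def testFunctions : Submodule ℝ (ℝ → ℝ) where
  carrier := {g | ContDiff ℝ (⊤ : ℕ∞) g ∧ HasCompactSupport g ∧ tsupport g ⊆ Set.Ioo 0 1}
  zero_mem' := by
    refine ⟨contDiff_const, HasCompactSupport.zero, ?_⟩
    simp [tsupport]
  add_mem' := by
    rintro a b ⟨ha, ha', ha''⟩ ⟨hb, hb', hb''⟩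
    exact ⟨ha.add hb, ha'.add hb', (tsupport_add a b).trans (Set.union_subset ha'' hb'')⟩
  smul_mem' := by
    rintro c a ⟨ha, ha', ha''⟩
    refine ⟨ha.const_smul c, ha'.smul_left (f := fun _ => c), ?_⟩
    exact (tsupport_smul_subset_right (fun _ => c) a).trans ha''

theorem testFunctions.mul_mem {a h : ℝ → ℝ} (ha : a ∈ testFunctions)
    (hh : ContDiff ℝ (⊤ : ℕ∞) h) : (fun x => a x * h x) ∈ testFunctions :=
  ⟨ha.1.mul hh, ha.2.1.mul_right, (tsupport_mul_subset_left (f := a) (g := h)).trans ha.2.2⟩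

theorem testFunctions.exists_bound {a : ℝ → ℝ} (ha : a ∈ testFunctions) :
    ∃ C, ∀ x, |a x| ≤ C := by
  simpa using ha.2.1.exists_bound_of_continuous ha.1.continuous

/-! ### Oscillating phases -/

theorem integrable_mul_exp {μ : Measure ℝ} {u : ℝ → ℂ} (hu : Integrable u μ) {h : ℝ → ℝ}
    (hh : Continuous h) : Integrable (fun x => u x * exp (I * h x)) μ := by
  refine hu.mul_bdd (c := 1) (by fun_prop) (ae_of_all _ fun x => ?_)
  rw [mul_comm, norm_exp_ofReal_mul_I]

/-- The Riemann–Lebesgue lemma on a measurable set, along the frequencies `2πsk`. -/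
theorem tendsto_integral_mul_exp {μ : Measure ℝ} {S : Set ℝ} (hS : MeasurableSet S)
    (hμ : μ = volume.restrict S) (u : ℝ → ℂ) {s : ℝ} (hs : 0 < s) :
    Tendsto (fun k : ℕ => ∫ x, u x * exp (I * (s * (-(2 * Real.pi * k * x)) : ℝ)) ∂μ)
      atTop (𝓝 0) := by
  have h := (Real.tendsto_integral_exp_smul_cocompact (S.indicator u)).comp
    ((tendsto_natCast_atTop_atTop.const_mul_atTop hs).mono_right atTop_le_cocompact)
  refine h.congr fun k => ?_
  rw [hμ, ← integral_indicator hS]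
  refine integral_congr_ae (ae_of_all _ fun x => ?_)
  by_cases hx : x ∈ S
  · simp only [hx, Set.indicator_of_mem, Circle.smul_def, Real.fourierChar_apply, smul_eq_mul]
    rw [mul_comm]
    congr 2
    push_cast
    ring
  · simp [hx]

/-- There are test functions `ψ k` such that `e^{isψ k}` converges to `0` weakly against `L¹(0,1)`
for each `s > 0`. They are linear phases of growing slope times bumps that are `1` on intervals
exhausting `(0,1)`; the bumps do not affect the limit, by dominated convergence. -/
theorem exists_oscillating : ∃ ψ : ℕ → ℝ → ℝ, (∀ k, ψ k ∈ testFunctions) ∧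
    ∀ u : ℝ → ℂ, IntegrableOn u (Set.Ioo 0 1) → ∀ s : ℝ, 0 < s →
      Tendsto (fun k => ∫ x in Set.Ioo (0 : ℝ) 1, u x * exp (I * (s * ψ k x : ℝ)))
        atTop (𝓝 0) := by
  let η : ℕ → ContDiffBump (1 / 2 : ℝ) := fun k =>
    { rIn := 1 / 2 - 1 / (k + 3)
      rOut := 1 / 2 - 1 / (k + 4)
      rIn_pos := by
        have : (1 : ℝ) / (k + 3) ≤ 1 / 3 := by
          apply one_div_le_one_div_of_le <;> linarith [(Nat.cast_nonneg k : (0 : ℝ) ≤ k)]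
        linarith
      rIn_lt_rOut := by
        have : (1 : ℝ) / (k + 4) < 1 / (k + 3) := by
          apply one_div_lt_one_div_of_lt <;> linarith [(Nat.cast_nonneg k : (0 : ℝ) ≤ k)]
        linarith }
  have hη : ∀ k, (η k : ℝ → ℝ) ∈ testFunctions := by
    intro k
    refine ⟨(η k).contDiff, (η k).hasCompactSupport, ?_⟩
    rw [(η k).tsupport_eq, Real.closedBall_eq_Icc]
    have h4 : (0 : ℝ) < 1 / (k + 4) := by positivity
    intro x hx
    simp only [η, Set.mem_Icc, Set.mem_Ioo] at hx ⊢
    constructor <;> linarith [hx.1, hx.2]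
  refine ⟨fun k x => η k x * (-(2 * Real.pi * k * x)), fun k =>
    testFunctions.mul_mem (hη k) (by fun_prop), fun u hu s hs => ?_⟩
  have hRL := tendsto_integral_mul_exp measurableSet_Ioo rfl u hs (S := Set.Ioo (0 : ℝ) 1)
  have hdiff : Tendsto (fun k : ℕ => ∫ x in Set.Ioo (0 : ℝ) 1,
      (u x * exp (I * (s * (η k x * (-(2 * Real.pi * k * x))) : ℝ)) -
        u x * exp (I * (s * (-(2 * Real.pi * k * x)) : ℝ)))) atTop
      (𝓝 (∫ x in Set.Ioo (0 : ℝ) 1, (0 : ℂ))) := by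
    refine tendsto_integral_of_dominated_convergence (fun x => ‖u x‖ * 2) ?_ ?_ ?_ ?_
    · intro k
      exact ((integrable_mul_exp hu (by have := (η k).continuous; fun_prop)).sub
        (integrable_mul_exp hu (by fun_prop))).aestronglyMeasurable
    · exact hu.norm.mul_const 2
    · intro k
      refine ae_of_all _ fun x => ?_
      rw [← mul_sub, norm_mul]
      gcongr
      refine (norm_sub_le _ _).trans ?_
      rw [mul_comm I, mul_comm I, norm_exp_ofReal_mul_I, norm_exp_ofReal_mul_I]
      norm_num
    · refine (ae_restrict_iff' measurableSet_Ioo).2 (ae_of_all _ fun x hx => ?_)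
      have hlim : Tendsto (fun k : ℕ => (1 : ℝ) / (k + 3)) atTop (𝓝 0) :=
        tendsto_const_nhds.div_atTop (tendsto_natCast_atTop_atTop.atTop_add tendsto_const_nhds)
      have h0 : (0 : ℝ) < min x (1 - x) := lt_min hx.1 (by linarith [hx.2])
      refine tendsto_const_nhds.congr' ?_
      filter_upwards [hlim.eventually_lt_const h0] with k hk
      have h1 := lt_min_iff.1 hk
      rw [(η k).one_of_mem_closedBall, one_mul, sub_self]
      rw [Real.closedBall_eq_Icc]
      simp only [η, Set.mem_Icc]
      constructor <;> linarith [h1.1, h1.2]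
  have hsum := hdiff.add hRL
  simp only [integral_zero, add_zero] at hsum
  refine hsum.congr fun k => ?_
  rw [integral_sub (integrable_mul_exp hu (by have := (η k).continuous; fun_prop))
    (integrable_mul_exp hu (by fun_prop)), sub_add_cancel]

/-! ### The phase correction and its first variation -/

/-- Second order estimate for `s ↦ e^{is}`: the function `e^{is} - is` has derivative of norm at
most `|s|`, hence is `R`-Lipschitz on `[-R, R]`. -/
theorem norm_exp_sub_exp_sub_le {R s t : ℝ} (hs : |s| ≤ R) (ht : |t| ≤ R) :
    ‖exp (I * s) - exp (I * t) - I * (s - t)‖ ≤ R * |s - t| := by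
  have hderiv : ∀ x : ℝ, HasDerivAt (fun y : ℝ => exp (I * y) - I * y)
      (exp (I * x) * I - I) x := by
    intro x
    have h1 : HasDerivAt (fun y : ℝ => I * (y : ℂ)) I x := by
      simpa using (hasDerivAt_id x).ofReal_comp.const_mul I
    exact h1.cexp.sub h1
  have := Convex.norm_image_sub_le_of_norm_hasDerivWithin_le (s := Set.Icc (-R) R) (C := R)
    (fun x _ => (hderiv x).hasDerivWithinAt) (fun x hx => ?_) (convex_Icc _ _)
    (abs_le.1 ht) (abs_le.1 hs)
  · rw [Real.norm_eq_abs] at this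
    have e : exp (I * s) - exp (I * t) - I * (s - t)
        = exp (I * s) - I * s - (exp (I * t) - I * t) := by ring
    rwa [e]
  · rw [← sub_one_mul, norm_mul, norm_I, mul_one]
    exact Real.norm_exp_I_mul_ofReal_sub_one_le.trans (abs_le.2 hx)

/-- The phase correction `2 Im (w e^{-iψ})`, where `w = ∑ l, z l * a l`. -/
noncomputable def corr {m : ℕ} (a : Fin m → ℝ → ℝ) (ψ : ℝ → ℝ) (z : Fin m → ℂ) (x : ℝ) : ℝ :=
  ∑ l, a l x * (2 * (z l * exp (-(I * ψ x))).im)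

theorem corr_sub {m : ℕ} (a : Fin m → ℝ → ℝ) (ψ : ℝ → ℝ) (z z' : Fin m → ℂ) (x : ℝ) :
    corr a ψ z x - corr a ψ z' x = corr a ψ (z - z') x := by
  simp only [corr, ← Finset.sum_sub_distrib, Pi.sub_apply, sub_mul, sub_im]
  exact Finset.sum_congr rfl fun l _ => by ring

theorem corr_mem {m : ℕ} {a : Fin m → ℝ → ℝ} (ha : ∀ l, a l ∈ testFunctions) {ψ : ℝ → ℝ}
    (hψ : ψ ∈ testFunctions) (z : Fin m → ℂ) : corr a ψ z ∈ testFunctions := by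
  have e : corr a ψ z = ∑ l, fun x => a l x * (2 * (z l * exp (-(I * ψ x))).im) := by
    ext x
    simp [corr]
  rw [e]
  refine sum_mem fun l _ => testFunctions.mul_mem (ha l) ?_
  have hψ' : ContDiff ℝ (⊤ : ℕ∞) fun x => (ψ x : ℂ) := ofRealCLM.contDiff.comp hψ.1
  have h1 : ContDiff ℝ (⊤ : ℕ∞) fun x => z l * exp (-(I * ψ x)) :=
    contDiff_const.mul (contDiff_const.mul hψ').neg.cexp
  exact contDiff_const.mul (imCLM.contDiff.comp h1)

theorem abs_corr_le {m : ℕ} {a : Fin m → ℝ → ℝ} {A : ℝ} {x : ℝ} (hA : ∑ l, |a l x| ≤ A)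
    (ψ : ℝ → ℝ) (z : Fin m → ℂ) : |corr a ψ z x| ≤ 2 * A * ‖z‖ := by
  calc |corr a ψ z x| ≤ ∑ l, |a l x| * (2 * ‖z‖) := by
        refine (Finset.abs_sum_le_sum_abs _ _).trans (Finset.sum_le_sum fun l _ => ?_)
        rw [abs_mul, abs_mul, abs_two]
        gcongr
        refine (abs_im_le_norm _).trans ?_
        have : -(I * (ψ x : ℂ)) = ((-ψ x : ℝ) : ℂ) * I := by push_cast; ring
        rw [norm_mul, this, norm_exp_ofReal_mul_I, mul_one]
        exact norm_le_pi_norm z l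
    _ = (∑ l, |a l x|) * (2 * ‖z‖) := by rw [Finset.sum_mul]
    _ ≤ A * (2 * ‖z‖) := by gcongr
    _ = 2 * A * ‖z‖ := by ring

/-- The first variation of `e^{iψ}` along the correction `corr a ψ z` is `w - conj w * e^{2iψ}` with
`w = ∑ l, z l * a l`: up to an oscillating term, it is `w` itself. -/
theorem exp_mul_corr {m : ℕ} (a : Fin m → ℝ → ℝ) (ψ : ℝ → ℝ) (z : Fin m → ℂ) (x : ℝ) :
    exp (I * ψ x) * (I * corr a ψ z x) =
      ∑ l, (a l x * z l - (starRingEnd ℂ) (z l) * (a l x * exp (I * (2 * ψ x : ℝ)))) := by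
  have key : ∀ w : ℂ, exp (I * ψ x) * (I * (2 * ((w * exp (-(I * ψ x))).im : ℂ))) =
      w - (starRingEnd ℂ) w * exp (I * (2 * ψ x : ℝ)) := by
    intro w
    have h1 : (2 : ℂ) * ((w * exp (-(I * ψ x))).im : ℂ) * I =
        w * exp (-(I * ψ x)) - (starRingEnd ℂ) (w * exp (-(I * ψ x))) := by
      rw [sub_conj]
      push_cast
      ring
    have h2 : (starRingEnd ℂ) (exp (-(I * ψ x))) = exp (I * ψ x) := by
      rw [← exp_conj]
      simp
    have h3 : exp (I * (2 * ψ x : ℝ)) = exp (I * ψ x) * exp (I * ψ x) := by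
      rw [← exp_add]
      congr 1
      push_cast
      ring
    have h4 : exp (I * ψ x) * exp (-(I * ψ x)) = 1 := by
      rw [← exp_add, add_neg_cancel, exp_zero]
    rw [map_mul, h2] at h1
    rw [h3]
    linear_combination exp (I * ψ x) * h1 + w * h4
  simp only [corr, ofReal_sum, Finset.mul_sum]
  refine Finset.sum_congr rfl fun l _ => ?_
  have := key (z l)
  push_cast at this ⊢
  linear_combination (a l x : ℂ) * this

/-! ### Solving for the correction -/

/-- If the products `v j * a l` have small integrals against `e^{2iψ}`, then
`z ↦ (∫ v j e^{i(ψ + corr a ψ z)})_j` differs from the identity by a `1/2`-Lipschitz map on a ball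
whose radius depends only on bounds for `a` and `v`. -/
theorem approximatesLinearOn_phase {m : ℕ} {v a : Fin m → ℝ → ℝ} {ψ : ℝ → ℝ} {A N δ r : ℝ}
    {μ : Measure ℝ}
    (hv : ∀ j, Integrable (v j) μ)
    (ha : ∀ l, a l ∈ testFunctions)
    (hδ : ∀ j l, ∫ x, v j x * a l x ∂μ = if j = l then 1 else 0)
    (hψ : ψ ∈ testFunctions) (hA : ∀ x, ∑ l, |a l x| ≤ A) (hA0 : 0 ≤ A)
    (hN : ∀ j, ∫ x, |v j x| ∂μ ≤ N)
    (hosc : ∀ j l, ‖∫ x, (v j x * a l x : ℂ) * exp (I * (2 * ψ x : ℝ)) ∂μ‖ ≤ δ)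
    (hr : 0 ≤ r) (hsmall : 4 * A ^ 2 * r * N ≤ 1 / 4) (hsmall' : m * δ ≤ 1 / 4) :
    ApproximatesLinearOn (fun (z : Fin m → ℂ) j =>
        ∫ x, (v j x : ℂ) * exp (I * (ψ x + corr a ψ z x : ℝ)) ∂μ)
      (ContinuousLinearEquiv.refl ℝ (Fin m → ℂ) : (Fin m → ℂ) →L[ℝ] (Fin m → ℂ))
      (Metric.closedBall 0 r) (1 / 2) := by
  intro z hz z' hz'
  rw [mem_closedBall_zero_iff] at hz hz'
  set d := z - z' with hd
  rw [pi_norm_le_iff_of_nonneg (by positivity)]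
  intro j
  have hvc : Integrable (fun x => (v j x : ℂ)) μ := (hv j).ofReal
  have hva : ∀ l, Integrable (fun x => (v j x * a l x : ℂ)) μ := by
    intro l
    obtain ⟨C, hC⟩ := testFunctions.exists_bound (ha l)
    have := (ha l).1.continuous
    exact hvc.mul_bdd (c := C) (by fun_prop) (ae_of_all _ fun x => by simpa using hC x)
  have hψc := hψ.1.continuous
  have hcc : ∀ z, Continuous (corr a ψ z) := fun z => (corr_mem ha hψ z).1.continuous
  -- By duality of `a` and `v`, the linear term integrates to `d j` plus an oscillating error.
  have hlin : ∀ x, (v j x : ℂ) * (exp (I * ψ x) * (I * corr a ψ d x)) =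
      ∑ l, ((v j x * a l x : ℂ) * d l -
        (starRingEnd ℂ) (d l) * ((v j x * a l x : ℂ) * exp (I * (2 * ψ x : ℝ)))) := by
    intro x
    rw [exp_mul_corr, Finset.mul_sum]
    exact Finset.sum_congr rfl fun l _ => by ring
  have hint : ∀ l, Integrable (fun x => (v j x * a l x : ℂ) * d l -
        (starRingEnd ℂ) (d l) * ((v j x * a l x : ℂ) * exp (I * (2 * ψ x : ℝ)))) μ := fun l =>
    ((hva l).mul_const _).sub ((integrable_mul_exp (hva l) (by fun_prop)).const_mul _)
  have hlinint : Integrable (fun x => (v j x : ℂ) * (exp (I * ψ x) * (I * corr a ψ d x))) μ := by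
    simp only [hlin]
    exact integrable_finsetSum _ fun l _ => hint l
  have hlinval : ∫ x, (v j x : ℂ) * (exp (I * ψ x) * (I * corr a ψ d x)) ∂μ =
      d j - ∑ l, (starRingEnd ℂ) (d l) *
        ∫ x, (v j x * a l x : ℂ) * exp (I * (2 * ψ x : ℝ)) ∂μ := by
    simp only [hlin]
    rw [integral_finsetSum _ fun l _ => hint l]
    have : ∀ l, ∫ x, ((v j x * a l x : ℂ) * d l -
        (starRingEnd ℂ) (d l) * ((v j x * a l x : ℂ) * exp (I * (2 * ψ x : ℝ)))) ∂μ =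
        (if j = l then d l else 0) - (starRingEnd ℂ) (d l) *
        ∫ x, (v j x * a l x : ℂ) * exp (I * (2 * ψ x : ℝ)) ∂μ := by
      intro l
      rw [integral_sub ((hva l).mul_const _)
        ((integrable_mul_exp (hva l) (by fun_prop)).const_mul _), integral_mul_const,
        integral_const_mul]
      have h := hδ j l
      have h' : ∫ x, (v j x * a l x : ℂ) ∂μ = ((∫ x, v j x * a l x ∂μ : ℝ) : ℂ) := by
        rw [← integral_complex_ofReal]
        simp
      rw [h', h]
      split_ifs <;> simp
    simp only [this, Finset.sum_sub_distrib, Finset.sum_ite_eq, Finset.mem_univ, if_true]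
  have hi1 := integrable_mul_exp hvc (h := fun x => ψ x + corr a ψ z x)
    (by have := hcc z; fun_prop)
  have hi2 := integrable_mul_exp hvc (h := fun x => ψ x + corr a ψ z' x)
    (by have := hcc z'; fun_prop)
  have hrem : ‖∫ x, ((v j x : ℂ) * exp (I * (ψ x + corr a ψ z x : ℝ)) -
      (v j x : ℂ) * exp (I * (ψ x + corr a ψ z' x : ℝ)) -
      (v j x : ℂ) * (exp (I * ψ x) * (I * corr a ψ d x))) ∂μ‖ ≤ 1 / 4 * ‖d‖ := by
    calc _ ≤ ∫ x, |v j x| * (2 * A * r * (2 * A * ‖d‖)) ∂μ := by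
          refine norm_integral_le_of_norm_le ((hv j).abs.mul_const _) (ae_of_all _ fun x => ?_)
          have e : (v j x : ℂ) * exp (I * (ψ x + corr a ψ z x : ℝ)) -
              (v j x : ℂ) * exp (I * (ψ x + corr a ψ z' x : ℝ)) -
              (v j x : ℂ) * (exp (I * ψ x) * (I * corr a ψ d x)) =
              v j x * (exp (ψ x * I) * (exp (I * corr a ψ z x) - exp (I * corr a ψ z' x) -
                I * (corr a ψ z x - corr a ψ z' x))) := by
            rw [← ofReal_sub, corr_sub, ← hd]
            push_cast
            rw [mul_add, mul_add, exp_add, exp_add, mul_comm (ψ x : ℂ) I]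
            ring
          rw [e, norm_mul, norm_mul, norm_exp_ofReal_mul_I, one_mul, norm_real,
            Real.norm_eq_abs]
          gcongr
          refine (norm_exp_sub_exp_sub_le (R := 2 * A * r) ?_ ?_).trans ?_
          · exact (abs_corr_le (hA x) ψ z).trans (by gcongr)
          · exact (abs_corr_le (hA x) ψ z').trans (by gcongr)
          · rw [corr_sub]
            gcongr
            exact abs_corr_le (hA x) ψ _
      _ = (∫ x, |v j x| ∂μ) * (4 * A ^ 2 * r * ‖d‖) := by rw [integral_mul_const]; ring
      _ ≤ N * (4 * A ^ 2 * r * ‖d‖) := by gcongr; exact hN j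
      _ = (4 * A ^ 2 * r * N) * ‖d‖ := by ring
      _ ≤ 1 / 4 * ‖d‖ := by gcongr
  have hi12 : Integrable (fun x => (v j x : ℂ) * exp (I * (ψ x + corr a ψ z x : ℝ)) -
      (v j x : ℂ) * exp (I * (ψ x + corr a ψ z' x : ℝ))) μ := hi1.sub hi2
  rw [integral_sub hi12 hlinint, integral_sub hi1 hi2, hlinval] at hrem
  have hosc' : ‖∑ l, (starRingEnd ℂ) (d l) *
      ∫ x, (v j x * a l x : ℂ) * exp (I * (2 * ψ x : ℝ)) ∂μ‖ ≤ 1 / 4 * ‖d‖ := by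
    calc _ ≤ ∑ l : Fin m, ‖d‖ * δ := by
          refine norm_sum_le_of_le _ fun l _ => ?_
          rw [norm_mul, RCLike.norm_conj]
          gcongr
          · exact norm_le_pi_norm d l
          · exact hosc j l
      _ = (m * δ) * ‖d‖ := by simp; ring
      _ ≤ 1 / 4 * ‖d‖ := by gcongr
  have hfin := (norm_sub_le _ _).trans (add_le_add hrem hosc')
  simp only [Pi.sub_apply, ContinuousLinearEquiv.coe_coe, ContinuousLinearEquiv.refl_apply]
  refine le_trans (le_of_eq ?_) (hfin.trans (le_of_eq ?_))
  · congr 1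
    ring
  · push_cast
    ring

/-- The theorem for functions `v j` that admit a dual family of test functions. -/
theorem exists_phase_of_dual {m : ℕ} {v a : Fin m → ℝ → ℝ}
    (hv : ∀ j, IntegrableOn (v j) (Set.Ioo 0 1)) (ha : ∀ l, a l ∈ testFunctions)
    (hδ : ∀ j l, ∫ x in Set.Ioo (0 : ℝ) 1, v j x * a l x = if j = l then 1 else 0) :
    ∃ g ∈ testFunctions, ∀ j,
      ∫ x in Set.Ioo (0 : ℝ) 1, (v j x : ℂ) * exp (I * g x) = 0 := by
  choose C hC using fun l => testFunctions.exists_bound (ha l)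
  have hC0 : ∀ l, 0 ≤ C l := fun l => (abs_nonneg _).trans (hC l 0)
  set A : ℝ := ∑ l, C l with hAdef
  have hA : ∀ x, ∑ l, |a l x| ≤ A := fun x => Finset.sum_le_sum fun l _ => hC l x
  have hA0 : 0 ≤ A := Finset.sum_nonneg fun l _ => hC0 l
  set N : ℝ := ∑ j, ∫ x in Set.Ioo (0 : ℝ) 1, |v j x| with hNdef
  have hN : ∀ j, ∫ x in Set.Ioo (0 : ℝ) 1, |v j x| ≤ N := fun j =>
    Finset.single_le_sum (f := fun j => ∫ x in Set.Ioo (0 : ℝ) 1, |v j x|)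
      (fun i _ => integral_nonneg fun x => abs_nonneg _) (Finset.mem_univ j)
  have hN0 : 0 ≤ N := Finset.sum_nonneg fun i _ => integral_nonneg fun x => abs_nonneg _
  have hpos : 0 < 16 * A ^ 2 * N + 1 := by positivity
  set r : ℝ := 1 / (16 * A ^ 2 * N + 1) with hrdef
  have hr : 0 < r := by positivity
  have hsmall : 4 * A ^ 2 * r * N ≤ 1 / 4 := by
    have : r * (16 * A ^ 2 * N + 1) = 1 := by rw [hrdef]; field_simp
    nlinarith
  set δ : ℝ := 1 / (4 * (m + 1)) with hδdef
  have hδ0 : 0 < δ := by positivity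
  have hsmall' : m * δ ≤ 1 / 4 := by
    rw [hδdef, mul_one_div, div_le_div_iff₀ (by positivity) (by norm_num)]
    linarith
  obtain ⟨ψ, hψ, hlim⟩ := exists_oscillating
  have hvc : ∀ j, IntegrableOn (fun x => (v j x : ℂ)) (Set.Ioo 0 1) := fun j => (hv j).ofReal
  have hva : ∀ j l, IntegrableOn (fun x => (v j x * a l x : ℂ)) (Set.Ioo 0 1) := by
    intro j l
    have := (ha l).1.continuous
    exact (hvc j).mul_bdd (c := C l) (by fun_prop) (ae_of_all _ fun x => by simpa using hC l x)
  have ev1 : ∀ᶠ k in atTop, ∀ j l, ‖∫ x in Set.Ioo (0 : ℝ) 1,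
      (v j x * a l x : ℂ) * exp (I * (2 * ψ k x : ℝ))‖ ≤ δ := by
    refine eventually_all.2 fun j => eventually_all.2 fun l => ?_
    have := (hlim _ (hva j l) 2 two_pos).norm
    rw [norm_zero] at this
    exact this.eventually_le_const hδ0
  have ev2 : ∀ᶠ k in atTop, ∀ j, ‖∫ x in Set.Ioo (0 : ℝ) 1,
      (v j x : ℂ) * exp (I * (1 * ψ k x : ℝ))‖ ≤ r / 2 := by
    refine eventually_all.2 fun j => ?_
    have := (hlim _ (hvc j) 1 one_pos).norm
    rw [norm_zero] at this
    exact this.eventually_le_const (by positivity)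
  obtain ⟨k, h1, h2⟩ := (ev1.and ev2).exists
  have happ := approximatesLinearOn_phase hv ha hδ (hψ k) hA hA0 hN h1 hr.le hsmall hsmall'
  have hsurj := happ.surjOn_closedBall_of_nonlinearRightInverse
    ⟨id, 1, fun y => by simp, fun y => by simp⟩ hr.le subset_rfl
  obtain ⟨z, -, hz⟩ := hsurj (a := 0) (by
    rw [Metric.mem_closedBall, dist_zero_left, pi_norm_le_iff_of_nonneg (by norm_num; linarith)]
    intro j
    have := h2 j
    simp only [one_mul] at this
    simp only [corr, Pi.zero_apply, zero_mul, zero_im, mul_zero, Finset.sum_const_zero, add_zero]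
    refine this.trans (le_of_eq ?_)
    norm_num
    ring)
  exact ⟨ψ k + corr a (ψ k) z, add_mem (hψ k) (corr_mem ha (hψ k) z), fun j => congrFun hz j⟩

/-! ### Dual test functions and reduction to independent families -/

/-- A family in `L¹(0,1)` that is linearly independent modulo null sets has a dual family of test
functions: a functional vanishing on all vectors `(∫ v j * a)_j` gives a linear combination of the
`v j` that is orthogonal to every test function, hence is zero almost everywhere. -/
theorem exists_dual {m : ℕ} {v : Fin m → ℝ → ℝ}
    (hv : ∀ j, IntegrableOn (v j) (Set.Ioo 0 1))
    (hli : ∀ c : Fin m → ℝ,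
      (∀ᵐ x ∂volume.restrict (Set.Ioo (0 : ℝ) 1), ∑ j, c j * v j x = 0) → c = 0) :
    ∃ a : Fin m → ℝ → ℝ, (∀ l, a l ∈ testFunctions) ∧
      ∀ j l, ∫ x in Set.Ioo (0 : ℝ) 1, v j x * a l x = if j = l then 1 else 0 := by
  have hint : ∀ j, ∀ a ∈ testFunctions, IntegrableOn (fun x => v j x * a x) (Set.Ioo 0 1) := by
    intro j a ha
    obtain ⟨C, hC⟩ := testFunctions.exists_bound ha
    exact (hv j).mul_bdd (c := C) ha.1.continuous.aestronglyMeasurable (ae_of_all _ hC)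
  let L : testFunctions →ₗ[ℝ] (Fin m → ℝ) :=
    { toFun := fun a j => ∫ x in Set.Ioo (0 : ℝ) 1, v j x * (a : ℝ → ℝ) x
      map_add' := by
        intro a b
        ext j
        simp only [Submodule.coe_add, Pi.add_apply, mul_add]
        exact integral_add (hint j a a.2) (hint j b b.2)
      map_smul' := by
        intro c a
        ext j
        simp only [Submodule.coe_smul, Pi.smul_apply, smul_eq_mul, RingHom.id_apply]
        rw [← integral_const_mul]
        simp only [mul_left_comm] }
  have hL : LinearMap.range L = ⊤ := by
    by_contra hne
    obtain ⟨φ, hφ, hker⟩ := Submodule.exists_le_ker_of_lt_top _ (lt_top_iff_ne_top.2 hne)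
    set c : Fin m → ℝ := fun j => φ fun i => if j = i then 1 else 0 with hc
    have hφc : ∀ y, φ y = ∑ j, y j * c j := by
      intro y
      simp only [LinearMap.pi_apply_eq_sum_univ φ y, hc, smul_eq_mul]
    have hzero := isOpen_Ioo.ae_eq_zero_of_integral_contDiff_smul_eq_zero
      (U := Set.Ioo (0 : ℝ) 1) (μ := volume) (f := fun x => ∑ j, c j * v j x) ?_ ?_
    · have h0 : c = 0 := hli c ((ae_restrict_iff' measurableSet_Ioo).2 hzero)
      refine hφ (LinearMap.ext fun y => ?_)
      rw [hφc, h0]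
      simp
    · have hi : IntegrableOn (fun x => ∑ j, c j * v j x) (Set.Ioo 0 1) :=
        integrable_finsetSum _ fun j _ => (hv j).const_mul (c j)
      exact hi.locallyIntegrableOn
    · intro g hg hg' hg''
      have hgt : g ∈ testFunctions := ⟨hg, hg', hg''⟩
      have h1 : φ (L ⟨g, hgt⟩) = 0 := hker ⟨_, rfl⟩
      rw [hφc] at h1
      have h2 : ∫ x in Set.Ioo (0 : ℝ) 1, g x • ∑ j, c j * v j x = 0 := by
        refine Eq.trans ?_ h1
        simp only [L, LinearMap.coe_mk, AddHom.coe_mk, ← integral_mul_const]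
        rw [← integral_finsetSum _ fun j _ => (hint j g hgt).mul_const (c j)]
        refine integral_congr_ae (ae_of_all _ fun x => ?_)
        simp only [smul_eq_mul, Finset.mul_sum]
        exact Finset.sum_congr rfl fun j _ => by ring
      rw [← h2]
      refine (setIntegral_eq_integral_of_forall_compl_eq_zero fun x hx => ?_).symm
      rw [image_eq_zero_of_notMem_tsupport fun h => hx (hg'' h), zero_smul]
  have hsurj : ∀ l : Fin m, ∃ a, L a = Pi.single l 1 := fun l => LinearMap.range_eq_top.1 hL _
  choose a ha using hsurj
  refine ⟨fun l => a l, fun l => (a l).2, fun j l => ?_⟩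
  have := congrFun (ha l) j
  rwa [Pi.single_apply] at this

/-- Smooth, complex Hobby–Rice theorem (Lazarev–Lieb): given `n ≥ 1` real-valued
integrable functions on `[0,1]`, there is a real-valued `g ∈ C_c^∞((0,1); ℝ)` such that
`∫_0^1 f_j e^{ig} = 0` for all `j`. -/
theorem smooth_hobby_rice (n : ℕ) (hn : 1 ≤ n) (f : Fin n → ℝ → ℝ)
    (hf : ∀ j, IntegrableOn (f j) (Set.Icc 0 1)) :
    ∃ g : ℝ → ℝ, ContDiff ℝ (⊤ : ℕ∞) g ∧ HasCompactSupport g ∧ tsupport g ⊆ Set.Ioo 0 1 ∧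
      ∀ j, ∫ x in (0:ℝ)..1, (f j x : ℂ) * Complex.exp (Complex.I * g x) = 0 := by
  have hf' : ∀ j, Integrable (f j) (volume.restrict (Set.Ioo (0 : ℝ) 1)) := fun j =>
    (hf j).mono_set Set.Ioo_subset_Icc_self
  set V : Submodule ℝ (Lp ℝ 1 (volume.restrict (Set.Ioo (0 : ℝ) 1))) :=
    Submodule.span ℝ (Set.range fun j => (hf' j).toL1 (f j)) with hV
  have : FiniteDimensional ℝ V := FiniteDimensional.span_of_finite ℝ (Set.finite_range _)
  let b := Module.finBasis ℝ V
  have hv : ∀ l, Integrable (b l : Lp ℝ 1 (volume.restrict (Set.Ioo (0 : ℝ) 1)))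
    (volume.restrict (Set.Ioo (0 : ℝ) 1)) := fun l => L1.integrable_coeFn _
  have hsum : ∀ c : Fin (Module.finrank ℝ V) → ℝ,
      ((∑ l, c l • b l : V) : Lp ℝ 1 (volume.restrict (Set.Ioo (0 : ℝ) 1)))
        =ᵐ[volume.restrict (Set.Ioo (0 : ℝ) 1)] fun x => ∑ l, c l *
        (b l : Lp ℝ 1 (volume.restrict (Set.Ioo (0 : ℝ) 1))) x := by
    intro c
    rw [Submodule.coe_sum]
    refine (Lp.coeFn_finsetSum _ _).trans ?_
    have h1 : ∀ᵐ x ∂volume.restrict (Set.Ioo (0 : ℝ) 1), ∀ l,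
        ((c l • b l : V) : Lp ℝ 1 (volume.restrict (Set.Ioo (0 : ℝ) 1))) x =
          c l * (b l : Lp ℝ 1 (volume.restrict (Set.Ioo (0 : ℝ) 1))) x :=
      ae_all_iff.2 fun l => Lp.coeFn_smul (c l) _
    filter_upwards [h1] with x hx
    simp only [Finset.sum_apply, hx]
  obtain ⟨a, ha, hδ⟩ := exists_dual hv (by
    intro c hc
    have h0 : ∑ l, c l • b l = 0 := by
      apply Subtype.ext
      apply Lp.ext
      filter_upwards [hsum c, hc, Lp.coeFn_zero ℝ 1 (volume.restrict (Set.Ioo (0 : ℝ) 1))]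
        with x h1 h2 h3
      rw [h1, h2, Submodule.coe_zero, h3, Pi.zero_apply]
    exact funext fun l => Fintype.linearIndependent_iff.1 b.linearIndependent c h0 l)
  obtain ⟨g, hg, hzero⟩ := exists_phase_of_dual hv ha hδ
  refine ⟨g, hg.1, hg.2.1, hg.2.2, fun j => ?_⟩
  rw [intervalIntegral.integral_of_le zero_le_one, integral_Ioc_eq_integral_Ioo]
  have hmem : (hf' j).toL1 (f j) ∈ V := Submodule.subset_span ⟨j, rfl⟩
  have hrep := b.sum_repr ⟨_, hmem⟩
  have hfj : f j =ᵐ[volume.restrict (Set.Ioo (0 : ℝ) 1)] fun x =>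
      ∑ l, b.repr ⟨_, hmem⟩ l * (b l : Lp ℝ 1 (volume.restrict (Set.Ioo (0 : ℝ) 1))) x := by
    refine (hf' j).coeFn_toL1.symm.trans ?_
    have := hsum fun l => b.repr ⟨_, hmem⟩ l
    rwa [hrep] at this
  have hcongr : ∫ x in Set.Ioo (0 : ℝ) 1, (f j x : ℂ) * exp (I * g x) =
      ∫ x in Set.Ioo (0 : ℝ) 1, ∑ l, (b.repr ⟨_, hmem⟩ l : ℂ) *
        (((b l : Lp ℝ 1 (volume.restrict (Set.Ioo (0 : ℝ) 1))) x : ℂ) * exp (I * g x)) := by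
    refine integral_congr_ae ?_
    filter_upwards [hfj] with x hx
    rw [hx]
    push_cast
    rw [Finset.sum_mul]
    exact Finset.sum_congr rfl fun l _ => by ring
  rw [hcongr, integral_finsetSum]
  · refine Finset.sum_eq_zero fun l _ => ?_
    rw [integral_const_mul, hzero l, mul_zero]
  · exact fun l _ => (integrable_mul_exp (hv l).ofReal hg.1.continuous).const_mul _
end

section
/- Let n ≥ 1 and let f_1, …, f_n ∈ L¹([0,1]) be complex-valued. Then there exists a real-valued function g ∈ C_c^∞((0,1); ℝ) such that ∫_0^1 f_j(x) e^{i g(x)} dx = 0 for all 1 ≤ j ≤ n. -/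
/-!
No topological input (Borsuk–Ulam) is needed: a rapidly oscillating phase makes all the integrals
small, and a quantitative inverse function theorem corrects them to exactly zero.

By Riemann–Lebesgue there is a phase `φ ∈ C_c^∞((0,1))` such that finitely many given integrals
`∫ h e^{iφ}` and `∫ h e^{2iφ}` are as small as desired (`exists_phase`). Suppose first that there
are real test functions `p_l` with `∫ f_k p_l = δ_{kl}`. For complex parameters `t`, put
`q_t = ∑ t_l p_l` and perturb `φ` by `δ_t = 2 Im (q_t e^{-iφ})`. Since
`i e^{iφ} δ_t = q_t - conj(q_t) e^{2iφ}`, the map `F(t)_k = ∫ f_k e^{i(φ + δ_t)}` has derivative at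
`0` close to the identity, while the second-order error is bounded in terms of `‖f_k‖₁` and `p`
only, independently of `φ`. Hence `F` is `1/2`-close to the identity on a ball whose radius does
not depend on `φ`, and `F(0)` is small, so `F` vanishes somewhere
(`exists_smooth_of_biorthogonal`).

The general case reduces to this one by linear algebra: a basis of the space of moment vectors
`(∫ f_j p)_j` of test functions `p` provides a biorthogonal system, and by the fundamental lemma of
the calculus of variations the moments of any bounded function lie in that same space.
-/

open MeasureTheory Complex

lemma norm_exp_sub_exp_sub_le_s1 {M a b : ℝ} (ha : |a| ≤ M) (hb : |b| ≤ M) :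
    ‖cexp (I * a) - cexp (I * b) - I * (a - b)‖ ≤ M * |a - b| := by
  have hd : ∀ s ∈ Set.Icc (-M) M, HasDerivWithinAt (fun s : ℝ => cexp (I * s) - I * s)
      (cexp (I * s) * I - I) (Set.Icc (-M) M) s := by
    intro s _
    have h0 : HasDerivAt (fun s : ℝ => I * (s : ℂ)) I s := by
      simpa using (Complex.ofRealCLM.hasDerivAt (x := s)).const_mul I
    exact ((h0.cexp).sub h0).hasDerivWithinAt
  have hb' : ∀ s ∈ Set.Icc (-M) M, ‖cexp (I * s) * I - I‖ ≤ M := by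
    intro s hs
    have : cexp (I * s) * I - I = (cexp (I * s) - 1) * I := by ring
    rw [this, norm_mul, norm_I, mul_one]
    exact (Real.norm_exp_I_mul_ofReal_sub_one_le).trans (by simpa using abs_le.2 hs)
  have := (convex_Icc (-M) M).norm_image_sub_le_of_norm_hasDerivWithin_le hd hb'
    (abs_le.1 hb) (abs_le.1 ha)
  simp only [Real.norm_eq_abs] at this
  calc ‖cexp (I * a) - cexp (I * b) - I * (a - b)‖
      = ‖cexp (I * a) - I * a - (cexp (I * b) - I * b)‖ := by congr 1; ring
    _ ≤ M * |a - b| := this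

/-- Riemann–Lebesgue with a compactly supported phase: the linear phase `w x` is cut off to
`φ x = w x χ x`, where the bump `χ` equals `1` off a set on which all `|h a|` have small integral.
That set is fixed before `w`, so the cut-off costs little, uniformly in `w`. -/
lemma exists_phase {α : Type*} [Finite α] (h : α → ℝ → ℂ)
    (hh : ∀ a, Integrable (h a) (volume.restrict (Set.Ioo 0 1))) {η : ℝ} (hη : 0 < η) :
    ∃ φ : ℝ → ℝ, ContDiff ℝ (⊤ : ℕ∞) φ ∧ tsupport φ ⊆ Set.Ioo 0 1 ∧
      ∀ a, ‖∫ x in Set.Ioo (0 : ℝ) 1, h a x * cexp (I * φ x)‖ ≤ η ∧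
        ‖∫ x in Set.Ioo (0 : ℝ) 1, h a x * cexp (2 * I * φ x)‖ ≤ η := by
  let S : ℕ → Set ℝ := fun N => Set.Ioo 0 1 \ Metric.closedBall (1 / 2) (1 / 2 - 1 / (N + 3))
  have hS : ∀ N, MeasurableSet (S N) := fun N =>
    measurableSet_Ioo.diff Metric.isClosed_closedBall.measurableSet
  have hanti : Antitone S := by
    intro N N' hNN
    apply Set.sdiff_subset_sdiff_right
    apply Metric.closedBall_subset_closedBall
    have : (N : ℝ) ≤ N' := by exact_mod_cast hNN
    gcongr
  have hempty : ⋂ N, S N = ∅ := by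
    rw [Set.eq_empty_iff_forall_notMem]
    intro x hx
    rw [Set.mem_iInter] at hx
    have hx0 := (hx 0).1
    obtain ⟨N, hN⟩ := exists_nat_one_div_lt (lt_min hx0.1 (sub_pos.2 hx0.2))
    apply (hx N).2
    have h1 : (1 : ℝ) / (N + 3) ≤ 1 / (N + 1) := by gcongr; norm_num
    have h2 := hN.trans_le (min_le_left _ _)
    have h3 := hN.trans_le (min_le_right _ _)
    rw [Metric.mem_closedBall, Real.dist_eq, abs_le]
    constructor <;> linarith
  have htail : ∀ a, Filter.Tendsto (fun N => ∫ x in S N, ‖h a x‖) Filter.atTop (nhds 0) := by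
    intro a
    have := tendsto_setIntegral_of_antitone (μ := volume) (f := fun x => ‖h a x‖) hS hanti
      ⟨0, ((hh a).norm.mono_measure (Measure.restrict_mono Set.sdiff_subset le_rfl))⟩
    rwa [hempty, setIntegral_empty] at this
  obtain ⟨N, hN⟩ := (Filter.eventually_all.2 fun a =>
    (htail a).eventually (gt_mem_nhds (show (0:ℝ) < η / 4 by positivity))).exists
  have hN3 : (1 : ℝ) / (N + 3) ≤ 1 / 3 := by
    gcongr
    linarith [(Nat.cast_nonneg N : (0:ℝ) ≤ N)]
  have hN0 : (0 : ℝ) < 1 / (N + 3) := by positivity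
  let χ : ContDiffBump (1 / 2 : ℝ) :=
    ⟨1 / 2 - 1 / (N + 3), 1 / 2 - 1 / (N + 3) / 2, by linarith, by linarith⟩
  have hRL : ∀ a, Filter.Tendsto
      (fun w : ℝ => ∫ x in Set.Ioo (0:ℝ) 1, h a x * cexp (I * (w * x : ℝ)))
      (Filter.cocompact ℝ) (nhds 0) := by
    intro a
    have h1 := Real.tendsto_integral_exp_smul_cocompact ((Set.Ioo (0:ℝ) 1).indicator (h a))
    have h2 : Filter.Tendsto (fun w : ℝ => w * (-(2 * Real.pi)⁻¹)) (Filter.cocompact ℝ)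
        (Filter.cocompact ℝ) := by
      refine Filter.tendsto_cocompact_mul_right₀ ?_
      simp [Real.pi_ne_zero]
    refine (h1.comp h2).congr fun w => ?_
    rw [← integral_indicator measurableSet_Ioo]
    refine integral_congr_ae (.of_forall fun x => ?_)
    by_cases hx : x ∈ Set.Ioo (0:ℝ) 1
    · simp only [Set.indicator_of_mem hx, Circle.smul_def, Real.fourierChar_apply, smul_eq_mul]
      rw [mul_comm]
      congr 2
      have : (Real.pi : ℂ) ≠ 0 := by exact_mod_cast Real.pi_ne_zero
      push_cast
      field_simp
    · simp [Set.indicator_of_notMem hx]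
  have hRL' : ∀ a, ∀ᶠ w in Filter.cocompact ℝ,
      ‖∫ x in Set.Ioo (0:ℝ) 1, h a x * cexp (I * (w * x : ℝ))‖ < η / 2 := fun a => by
    have := (hRL a).norm
    rw [norm_zero] at this
    exact this.eventually (gt_mem_nhds (by positivity))
  have h2 : Filter.Tendsto (fun w : ℝ => 2 * w) (Filter.cocompact ℝ) (Filter.cocompact ℝ) :=
    Filter.tendsto_cocompact_mul_left₀ (by norm_num)
  obtain ⟨w, hw1, hw2⟩ := ((Filter.eventually_all.2 hRL').and
    (h2.eventually (Filter.eventually_all.2 hRL'))).exists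
  have key : ∀ a (s : ℝ), ‖∫ x in Set.Ioo (0:ℝ) 1, h a x * cexp (I * (s * x : ℝ))‖ < η / 2 →
      ‖∫ x in Set.Ioo (0:ℝ) 1, h a x * cexp (I * (s * x * χ x : ℝ))‖ ≤ η := by
    intro a s hs
    have hint : ∀ θ : ℝ → ℝ, Continuous θ → Integrable (fun x => h a x * cexp (I * (θ x : ℝ)))
        (volume.restrict (Set.Ioo 0 1)) := fun θ hθ =>
      (hh a).mul_bdd (c := 1) (by fun_prop) (.of_forall fun x => by simp [mul_comm I])
    have hχ : Continuous χ := χ.continuous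
    have i1 := hint (fun x => s * x * χ x) (by fun_prop)
    have i2 := hint (fun x => s * x) (by fun_prop)
    have hdiff : ‖∫ x in Set.Ioo (0:ℝ) 1, (h a x * cexp (I * (s * x * χ x : ℝ))
        - h a x * cexp (I * (s * x : ℝ)))‖ ≤ 2 * ∫ x in S N, ‖h a x‖ := by
      rw [← integral_const_mul]
      have : ∫ x in S N, 2 * ‖h a x‖ =
          ∫ x in Set.Ioo (0:ℝ) 1, (S N).indicator (fun x => 2 * ‖h a x‖) x := by
        rw [setIntegral_indicator (hS N), Set.inter_eq_right.2 Set.sdiff_subset]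
      rw [this]
      refine norm_integral_le_of_norm_le (((hh a).norm.const_mul 2).indicator (hS N)) ?_
      filter_upwards [ae_restrict_mem measurableSet_Ioo] with x hx
      by_cases hxS : x ∈ S N
      · rw [Set.indicator_of_mem hxS, ← mul_sub, norm_mul, mul_comm]
        gcongr
        refine (norm_sub_le _ _).trans ?_
        rw [mul_comm I, mul_comm I, norm_exp_ofReal_mul_I, norm_exp_ofReal_mul_I]
        norm_num
      · have : χ x = 1 := χ.one_of_mem_closedBall (by
          by_contra hc
          exact hxS ⟨hx, hc⟩)
        rw [Set.indicator_of_notMem hxS, this]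
        simp
    rw [integral_sub i1 i2] at hdiff
    have := norm_le_norm_add_norm_sub' (∫ x in Set.Ioo (0:ℝ) 1, h a x * cexp (I * (s * x * χ x : ℝ)))
      (∫ x in Set.Ioo (0:ℝ) 1, h a x * cexp (I * (s * x : ℝ)))
    linarith [hN a]
  refine ⟨fun x => w * x * χ x, ?_, ?_, fun a => ⟨key a w (hw1 a), ?_⟩⟩
  · have := χ.contDiff (n := (⊤ : ℕ∞))
    fun_prop
  · refine (tsupport_mul_subset_right (f := fun x => w * x)).trans ?_
    rw [χ.tsupport_eq]
    intro x hx
    rw [Metric.mem_closedBall, Real.dist_eq, abs_le] at hx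
    have : χ.rOut = 1 / 2 - 1 / (N + 3) / 2 := rfl
    constructor <;> linarith [hx.1, hx.2]
  · convert key a (2 * w) (hw2 a) using 6
    push_cast
    ring_nf

/-- The theorem for a family `f` admitting smooth test functions `p` biorthogonal to it. With `φ`
from `exists_phase`, the map `F t k = ∫ f k * exp (I (φ + δ t))` satisfies `‖F 0‖ ≤ r / 2` and
differs from the identity by a `1/2`-Lipschitz map on the ball of radius `r`, so it has a zero
there. -/
lemma exists_smooth_of_biorthogonal {ι : Type*} [Fintype ι] [DecidableEq ι] (f : ι → ℝ → ℂ)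
    (hf : ∀ k, Integrable (f k) (volume.restrict (Set.Ioo 0 1)))
    (p : ι → ℝ → ℝ) (hp : ∀ l, ContDiff ℝ (⊤ : ℕ∞) (p l))
    (hps : ∀ l, tsupport (p l) ⊆ Set.Ioo 0 1)
    (hfp : ∀ k l, ∫ x in Set.Ioo (0 : ℝ) 1, f k x * p l x = if k = l then 1 else 0) :
    ∃ g : ℝ → ℝ, ContDiff ℝ (⊤ : ℕ∞) g ∧ tsupport g ⊆ Set.Ioo 0 1 ∧
      ∀ k, ∫ x in Set.Ioo (0 : ℝ) 1, f k x * cexp (I * g x) = 0 := by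
  set μ : Measure ℝ := volume.restrict (Set.Ioo 0 1) with hμ
  have hpc : ∀ l, Continuous (p l) := fun l => (hp l).continuous
  obtain ⟨K, hK0, hK⟩ : ∃ K : ℝ, 0 < K ∧ ∀ x, ∑ l, |p l x| ≤ K := by
    have hcs : ∀ l, ∃ C, ∀ x, ‖p l x‖ ≤ C := fun l =>
      HasCompactSupport.exists_bound_of_continuous
        (isCompact_Icc.of_isClosed_subset (isClosed_tsupport _)
          ((hps l).trans Set.Ioo_subset_Icc_self)) (hpc l)
    choose C hC using hcs
    refine ⟨max 1 (∑ l, C l), by positivity, fun x => le_max_of_le_right ?_⟩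
    exact Finset.sum_le_sum fun l _ => hC l x
  obtain ⟨B, hB0, hB⟩ : ∃ B : ℝ, 0 < B ∧ ∀ k, ∫ x, ‖f k x‖ ∂μ ≤ B := by
    have h0 : ∀ k, 0 ≤ ∫ x, ‖f k x‖ ∂μ := fun k => integral_nonneg fun x => norm_nonneg _
    refine ⟨1 + ∑ k, ∫ x, ‖f k x‖ ∂μ, ?_, fun k => ?_⟩
    · have := Finset.sum_nonneg fun k (_ : k ∈ Finset.univ) => h0 k
      linarith
    · have := Finset.single_le_sum (fun k _ => h0 k) (Finset.mem_univ k)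
      linarith
  -- The radius `r` makes the quadratic error `B (2 K r) (2 K)` equal to `1 / 4`
  set r : ℝ := 1 / (16 * B * K ^ 2) with hr
  have hr0 : 0 < r := by positivity
  have hrB : B * (2 * K * r * (2 * K)) = 1 / 4 := by
    rw [hr]; field_simp; norm_num
  set η : ℝ := min (r / 2) (1 / (4 * (Fintype.card ι + 1))) with hη
  have hη0 : 0 < η := by positivity
  have hfpi : ∀ k l, Integrable (fun x => f k x * p l x) μ := fun k l => by
    refine (hf k).mul_bdd (c := K) (by fun_prop) (.of_forall fun x => ?_)
    rw [norm_real, Real.norm_eq_abs]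
    exact (Finset.single_le_sum (f := fun l => |p l x|) (fun l _ => abs_nonneg _)
      (Finset.mem_univ l)).trans (hK x)
  obtain ⟨φ, hφ, hφs, hφη⟩ := exists_phase
    (fun a : ι ⊕ (ι × ι) => Sum.elim (fun k => f k) (fun kl x => f kl.1 x * p kl.2 x) a)
    (by rintro (k | ⟨k, l⟩); exacts [hf k, hfpi k l]) hη0
  have hφ0 : ∀ k, ‖∫ x, f k x * cexp (I * φ x) ∂μ‖ ≤ r / 2 := fun k =>
    (hφη (.inl k)).1.trans (min_le_left _ _)
  have hφ1 : ∀ k, ∑ l, ‖∫ x, f k x * p l x * cexp (2 * I * φ x) ∂μ‖ ≤ 1 / 4 := fun k => by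
    calc ∑ l, ‖∫ x, f k x * p l x * cexp (2 * I * φ x) ∂μ‖
        ≤ ∑ l : ι, 1 / (4 * ((Fintype.card ι : ℝ) + 1)) :=
          Finset.sum_le_sum fun l _ => (hφη (.inr (k, l))).2.trans (min_le_right _ _)
      _ = Fintype.card ι / (4 * ((Fintype.card ι : ℝ) + 1)) := by simp; field_simp
      _ ≤ 1 / 4 := by
          rw [div_le_div_iff₀ (by positivity) (by norm_num)]
          linarith
  have hφc : Continuous φ := hφ.continuous
  -- The perturbation `δ t` oscillates with the same phase as `exp (I φ)`, so that their product
  -- has the non-oscillating part `q t`.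
  let q : (ι → ℂ) → ℝ → ℂ := fun t x => ∑ l, t l * p l x
  let δ : (ι → ℂ) → ℝ → ℝ := fun t x => 2 * (q t x * cexp (-(I * φ x))).im
  have hqK : ∀ t x, ‖q t x‖ ≤ K * ‖t‖ := fun t x => by
    calc ‖q t x‖ ≤ ∑ l, ‖t l * p l x‖ := norm_sum_le _ _
      _ ≤ ∑ l, |p l x| * ‖t‖ := by
          refine Finset.sum_le_sum fun l _ => ?_
          rw [norm_mul, norm_real, Real.norm_eq_abs, mul_comm]
          gcongr
          exact norm_le_pi_norm t l
      _ = (∑ l, |p l x|) * ‖t‖ := by rw [Finset.sum_mul]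
      _ ≤ K * ‖t‖ := by gcongr; exact hK x
  have hqsub : ∀ s t x, q (s - t) x = q s x - q t x := fun s t x => by
    simp only [q, Pi.sub_apply, sub_mul, Finset.sum_sub_distrib]
  have hδsub : ∀ s t x, δ (s - t) x = δ s x - δ t x := fun s t x => by
    simp only [δ, hqsub, sub_mul, sub_im, mul_sub]
  have hexp1 : ∀ y : ℝ, ‖cexp (I * y)‖ = 1 := fun y => by
    rw [mul_comm, norm_exp_ofReal_mul_I]
  have hδK : ∀ t x, |δ t x| ≤ 2 * K * ‖t‖ := fun t x => by
    have h1 := (abs_im_le_norm (q t x * cexp (-(I * φ x)))).trans_eq (norm_mul _ _)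
    have h2 : ‖cexp (-(I * φ x))‖ = 1 := by simpa using hexp1 (-φ x)
    rw [h2, mul_one] at h1
    simp only [δ, abs_mul, abs_two]
    linarith [hqK t x]
  have hδ : ∀ t, ContDiff ℝ (⊤ : ℕ∞) (δ t) := fun t => by
    have h1 : ∀ θ : ℝ → ℝ, ContDiff ℝ (⊤ : ℕ∞) θ →
        ContDiff ℝ (⊤ : ℕ∞) (fun x => (θ x : ℂ)) := fun θ hθ =>
      ofRealCLM.contDiff.comp hθ
    have h2 : ContDiff ℝ (⊤ : ℕ∞) (fun x => q t x * cexp (-(I * φ x))) :=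
      (ContDiff.sum fun l _ => contDiff_const.mul (h1 _ (hp l))).mul
        (contDiff_const.mul (h1 _ hφ)).neg.cexp
    exact contDiff_const.mul (imCLM.contDiff.comp h2)
  have hδc : ∀ t, Continuous (δ t) := fun t => (hδ t).continuous
  -- The derivative of `t ↦ exp (I (φ + δ t))` at `0` in direction `u` is the non-oscillating term
  -- `q u`, whose integral against `f k` is `u k`, plus a term oscillating like `exp (2 I φ)`.
  have hres : ∀ u x, cexp (I * φ x) * (I * δ u x) =
      q u x - (∑ l, (starRingEnd ℂ) (u l) * p l x) * cexp (2 * I * φ x) := fun u x => by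
    have hconj : (starRingEnd ℂ) (q u x * cexp (-(I * φ x))) =
        (∑ l, (starRingEnd ℂ) (u l) * p l x) * cexp (I * φ x) := by
      simp only [q, map_mul, map_sum, conj_ofReal, ← exp_conj, map_neg, conj_I, neg_mul, neg_neg]
    have him := sub_conj (q u x * cexp (-(I * φ x)))
    rw [hconj] at him
    have e1 : cexp (I * φ x) * cexp (-(I * φ x)) = 1 := by rw [← exp_add]; simp
    have e2 : cexp (2 * I * φ x) = cexp (I * φ x) * cexp (I * φ x) := by
      rw [← exp_add]; ring_nf
    have e3 : I * (δ u x : ℂ) = q u x * cexp (-(I * φ x))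
        - (∑ l, (starRingEnd ℂ) (u l) * p l x) * cexp (I * φ x) := by
      rw [him]; simp only [δ]; push_cast; ring
    rw [e3, e2]
    linear_combination q u x * e1
  let F : (ι → ℂ) → (ι → ℂ) := fun t k => ∫ x, f k x * cexp (I * (φ x + δ t x : ℝ)) ∂μ
  have hint : ∀ k (θ : ℝ → ℝ), Continuous θ → Integrable (fun x => f k x * cexp (I * θ x)) μ :=
    fun k θ hθ => (hf k).mul_bdd (c := 1) (by fun_prop) (.of_forall fun x => (hexp1 _).le)
  have hlin : ∀ k u, ‖∫ x, f k x * (cexp (I * φ x) * (I * δ u x)) ∂μ - u k‖ ≤ 1 / 4 * ‖u‖ := by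
    intro k u
    have hi2 : ∀ l, Integrable (fun x => f k x * p l x * cexp (2 * I * φ x)) μ := fun l => by
      refine (hfpi k l).mul_bdd (c := 1) (by fun_prop) (.of_forall fun x => ?_)
      have := (hexp1 (2 * φ x)).le
      push_cast at this
      rwa [← mul_assoc, mul_comm I] at this
    have e : ∀ x, f k x * (cexp (I * φ x) * (I * δ u x)) = ∑ l, u l * (f k x * p l x)
        - ∑ l, (starRingEnd ℂ) (u l) * (f k x * p l x * cexp (2 * I * φ x)) := fun x => by
      rw [hres, mul_sub, Finset.sum_mul, Finset.mul_sum, Finset.mul_sum]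
      congr 1 <;> exact Finset.sum_congr rfl fun l _ => by ring
    simp_rw [e]
    rw [integral_sub (integrable_finsetSum _ fun l _ => (hfpi k l).const_mul _)
      (integrable_finsetSum _ fun l _ => (hi2 l).const_mul _),
      integral_finsetSum _ (fun l _ => (hfpi k l).const_mul _),
      integral_finsetSum _ (fun l _ => (hi2 l).const_mul _)]
    simp_rw [integral_const_mul]
    have e' : ∑ l, u l * ∫ x, f k x * p l x ∂μ = u k := by
      simp [hfp]
    rw [e', sub_sub_cancel_left, norm_neg]
    calc _ ≤ ∑ l, ‖(starRingEnd ℂ) (u l) * ∫ x, f k x * p l x * cexp (2 * I * φ x) ∂μ‖ :=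
          norm_sum_le _ _
      _ ≤ ∑ l, ‖∫ x, f k x * p l x * cexp (2 * I * φ x) ∂μ‖ * ‖u‖ := by
          refine Finset.sum_le_sum fun l _ => ?_
          rw [norm_mul, RCLike.norm_conj, mul_comm]
          gcongr
          exact norm_le_pi_norm u l
      _ ≤ 1 / 4 * ‖u‖ := by
          rw [← Finset.sum_mul]
          gcongr
          exact hφ1 k
  have hquad : ∀ k, ∀ s ∈ Metric.closedBall (0 : ι → ℂ) r, ∀ t ∈ Metric.closedBall (0 : ι → ℂ) r,
      ‖F s k - F t k - ∫ x, f k x * (cexp (I * φ x) * (I * δ (s - t) x)) ∂μ‖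
        ≤ 1 / 4 * ‖s - t‖ := by
    intro k s hs t ht
    rw [mem_closedBall_zero_iff] at hs ht
    have i1 := hint k (fun x => φ x + δ s x) (hφc.add (hδc s))
    have i2 := hint k (fun x => φ x + δ t x) (hφc.add (hδc t))
    have i3 : Integrable (fun x => f k x * (cexp (I * φ x) * (I * δ (s - t) x))) μ := by
      have := hδc (s - t)
      refine (hf k).mul_bdd (c := 2 * K * ‖s - t‖) (by fun_prop) (.of_forall fun x => ?_)
      rw [norm_mul, hexp1, one_mul, norm_mul, norm_I, one_mul, norm_real]
      exact hδK _ _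
    simp only [F]
    have i12 : Integrable (fun x => f k x * cexp (I * (φ x + δ s x : ℝ))
        - f k x * cexp (I * (φ x + δ t x : ℝ))) μ := i1.sub i2
    rw [← integral_sub i1 i2, ← integral_sub i12 i3]
    have hle : ∀ x, ‖f k x * cexp (I * (φ x + δ s x : ℝ)) - f k x * cexp (I * (φ x + δ t x : ℝ))
        - f k x * (cexp (I * φ x) * (I * δ (s - t) x))‖
        ≤ ‖f k x‖ * (2 * K * r * (2 * K * ‖s - t‖)) := fun x => by
      have e : f k x * cexp (I * (φ x + δ s x : ℝ)) - f k x * cexp (I * (φ x + δ t x : ℝ))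
          - f k x * (cexp (I * φ x) * (I * δ (s - t) x)) = f k x * (cexp (I * φ x) *
            (cexp (I * δ s x) - cexp (I * δ t x) - I * (δ s x - δ t x))) := by
        rw [hδsub]
        push_cast
        rw [mul_add, mul_add, exp_add, exp_add]
        ring
      rw [e, norm_mul, norm_mul, hexp1, one_mul]
      gcongr
      refine (norm_exp_sub_exp_sub_le_s1 (M := 2 * K * r) ((hδK s x).trans (by gcongr))
        ((hδK t x).trans (by gcongr))).trans ?_
      gcongr
      rw [← hδsub]
      exact hδK _ _
    refine (norm_integral_le_of_norm_le ((hf k).norm.mul_const _) (.of_forall hle)).trans ?_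
    rw [integral_mul_const]
    calc (∫ x, ‖f k x‖ ∂μ) * (2 * K * r * (2 * K * ‖s - t‖))
        ≤ B * (2 * K * r * (2 * K * ‖s - t‖)) := by gcongr; exact hB k
      _ = 1 / 4 * ‖s - t‖ := by rw [← hrB]; ring
  have happrox : ApproximatesLinearOn F (ContinuousLinearMap.id ℝ (ι → ℂ))
      (Metric.closedBall 0 r) (1 / 2) := by
    intro s hs t ht
    rw [pi_norm_le_iff_of_nonneg (by positivity)]
    intro k
    have h1 := hquad k s hs t ht
    have h2 := hlin k (s - t)
    have h3 := norm_add_le_of_le h1 h2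
    rw [sub_add_sub_cancel] at h3
    refine h3.trans_eq ?_
    push_cast
    ring
  let R : (ContinuousLinearMap.id ℝ (ι → ℂ)).NonlinearRightInverse :=
    ⟨id, 1, fun y => by simp, fun y => rfl⟩
  have hsurj := happrox.surjOn_closedBall_of_nonlinearRightInverse R hr0.le le_rfl
  have h0 : (0 : ι → ℂ) ∈ Metric.closedBall (F 0) ((((R.nnnorm : ℝ))⁻¹ - (1 / 2 : NNReal)) * r) := by
    have hR : R.nnnorm = 1 := rfl
    have hq0 : ∀ x, δ 0 x = 0 := fun x => by simp [δ, q]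
    rw [hR, Metric.mem_closedBall, dist_zero_left]
    norm_num
    rw [pi_norm_le_iff_of_nonneg (by positivity)]
    intro k
    simpa [F, hq0, div_eq_inv_mul] using hφ0 k
  obtain ⟨t, -, ht⟩ := hsurj h0
  refine ⟨fun x => φ x + δ t x, hφ.add (hδ t), ?_, fun k => congrFun ht k⟩
  have hcl : IsClosed (tsupport φ ∪ ⋃ l, tsupport (p l)) :=
    (isClosed_tsupport _).union (isClosed_iUnion_of_finite fun l => isClosed_tsupport _)
  refine (closure_minimal ?_ hcl).trans (Set.union_subset hφs (Set.iUnion_subset hps))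
  intro x hx
  by_contra hxn
  simp only [Set.mem_union, Set.mem_iUnion, not_or, not_exists] at hxn
  apply hx
  have h1 := image_eq_zero_of_notMem_tsupport hxn.1
  have h2 : ∀ l, p l x = 0 := fun l => image_eq_zero_of_notMem_tsupport (hxn.2 l)
  simp [δ, q, h1, h2]

/-- Smooth Hobby–Rice theorem for complex-valued integrable functions on `[0,1]`. -/
theorem smooth_hobby_rice_complex (n : ℕ) (hn : 1 ≤ n) (f : Fin n → ℝ → ℂ)
    (hf : ∀ j, IntegrableOn (f j) (Set.Icc 0 1)) :
    ∃ g : ℝ → ℝ, ContDiff ℝ (⊤ : ℕ∞) g ∧ HasCompactSupport g ∧ tsupport g ⊆ Set.Ioo 0 1 ∧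
      ∀ j, ∫ x in (0:ℝ)..1, f j x * Complex.exp (Complex.I * g x) = 0 := by
  set μ : Measure ℝ := volume.restrict (Set.Ioo 0 1) with hμ
  let f' : ℝ → Fin n → ℂ := fun x j => f j x
  have hfj : ∀ j, Integrable (f j) μ := fun j => (hf j).mono_set Set.Ioo_subset_Icc_self
  have hf' : Integrable f' μ := Integrable.of_eval hfj
  -- A basis `b` of the span of the vectors of moments `∫ p f`, `p` a test function, yields a
  -- biorthogonal system: `G` reads off coordinates with respect to `b`.
  let T : Set (Fin n → ℂ) := {v | ∃ p : ℝ → ℝ, ContDiff ℝ (⊤ : ℕ∞) p ∧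
    tsupport p ⊆ Set.Ioo 0 1 ∧ v = ∫ x, (p x : ℂ) • f' x ∂μ}
  obtain ⟨b, hbT, hbspan, hbli⟩ := exists_linearIndependent ℂ T
  have : Finite b := hbli.finite
  have := Fintype.ofFinite b
  classical
  obtain ⟨G, hG⟩ := LinearMap.exists_leftInverse_of_injective
    (Fintype.linearCombination ℂ ((↑) : b → Fin n → ℂ))
    (LinearMap.ker_eq_bot.2 hbli.fintypeLinearCombination_injective)
  let Gc : (Fin n → ℂ) →L[ℂ] (b → ℂ) := LinearMap.toContinuousLinearMap G
  have hGint : ∀ u : ℝ → ℂ, Integrable (fun x => u x • f' x) μ → ∀ k,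
      ∫ x, G (f' x) k * u x ∂μ = G (∫ x, u x • f' x ∂μ) k := by
    intro u hu k
    have := ((ContinuousLinearMap.proj (R := ℂ) (φ := fun _ : b => ℂ) k).comp
      Gc).integral_comp_comm hu
    simpa [Gc, mul_comm] using this
  choose p hp hps hpb using fun k : b => hbT k.2
  have hbdd : ∀ q : ℝ → ℝ, ContDiff ℝ (⊤ : ℕ∞) q → tsupport q ⊆ Set.Ioo 0 1 →
      Integrable (fun x => (q x : ℂ) • f' x) μ := by
    intro q hq hqs
    have hqc := hq.continuous
    obtain ⟨C, hC⟩ := HasCompactSupport.exists_bound_of_continuous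
        (isCompact_Icc.of_isClosed_subset (isClosed_tsupport _)
          (hqs.trans Set.Ioo_subset_Icc_self)) hqc
    exact hf'.bdd_smul (φ := fun x => (q x : ℂ)) C (by fun_prop) (.of_forall fun x => by simpa using hC x)
  obtain ⟨g, hg, hgs, hg0⟩ := exists_smooth_of_biorthogonal (fun (k : b) x => G (f' x) k)
    (fun k => ((ContinuousLinearMap.proj (R := ℂ) (φ := fun _ : b => ℂ) k).comp
      Gc).integrable_comp hf') p hp hps (fun k l => by
      rw [hGint _ (hbdd _ (hp l) (hps l)) k, ← hpb l]
      have := LinearMap.congr_fun hG (Pi.single l 1)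
      simp only [LinearMap.comp_apply, Fintype.linearCombination_apply_single, one_smul,
        LinearMap.id_apply] at this
      rw [this, Pi.single_apply])
  have hgc := hg.continuous
  have hgi : Integrable (fun x => cexp (I * g x) • f' x) μ :=
    hf'.bdd_smul (φ := fun x => cexp (I * g x)) 1 (by fun_prop)
      (.of_forall fun x => by rw [mul_comm, norm_exp_ofReal_mul_I])
  -- A functional `ψ` vanishing on the moments of test functions has `ψ ∘ f = 0` almost everywhere,
  -- so moments of bounded functions lie in the same span and are detected by `G`.
  have hmem : ∫ x, cexp (I * g x) • f' x ∂μ ∈ Submodule.span ℂ T := by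
    by_contra hv
    obtain ⟨ψ, hψv, hψ⟩ := Submodule.exists_le_ker_of_notMem hv
    apply hψv
    let ψc : (Fin n → ℂ) →L[ℂ] ℂ := LinearMap.toContinuousLinearMap ψ
    have hψi : IntegrableOn (fun x => ψ (f' x)) (Set.Ioo 0 1) := ψc.integrable_comp hf'
    have hae := isOpen_Ioo.ae_eq_zero_of_integral_contDiff_smul_eq_zero
      (μ := volume) (f := fun x => ψ (f' x)) hψi.locallyIntegrableOn (by
        intro q hq _ hqs
        have h1 := hψ (Submodule.subset_span ⟨q, hq, hqs, rfl⟩ :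
          (∫ x, (q x : ℂ) • f' x ∂μ) ∈ Submodule.span ℂ T)
        have h2 := ψc.integral_comp_comm (hbdd q hq hqs)
        have h3 : ∫ x, q x • ψ (f' x) ∂μ = 0 := by
          change _ = ψ _ at h2
          rw [LinearMap.mem_ker.1 h1] at h2
          simpa [ψc] using h2
        rw [← h3, hμ, setIntegral_eq_integral_of_forall_compl_eq_zero]
        intro x hx
        rw [image_eq_zero_of_notMem_tsupport (fun h => hx (hqs h)), zero_smul])
    have h2 := ψc.integral_comp_comm hgi
    change _ = ψ _ at h2
    rw [← h2]
    refine integral_eq_zero_of_ae ?_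
    rw [hμ]
    filter_upwards [ae_restrict_mem measurableSet_Ioo, ae_restrict_of_ae hae] with x hx hx'
    simp [ψc, hx' hx]
  have hzero : ∫ x, cexp (I * g x) • f' x ∂μ = 0 := by
    rw [← hbspan] at hmem
    have hr : ∫ x, cexp (I * g x) • f' x ∂μ ∈
        LinearMap.range (Fintype.linearCombination ℂ ((↑) : b → Fin n → ℂ)) := by
      rwa [Fintype.range_linearCombination, Subtype.range_coe]
    obtain ⟨c, hc⟩ := hr
    have h1 : G (∫ x, cexp (I * g x) • f' x ∂μ) = 0 := by
      ext k
      rw [← hGint _ hgi k]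
      exact hg0 k
    have h2 := LinearMap.congr_fun hG c
    rw [LinearMap.comp_apply, hc, h1] at h2
    rw [← hc, ← show 0 = c from h2, map_zero]
  refine ⟨g, hg, isCompact_Icc.of_isClosed_subset (isClosed_tsupport _)
    (hgs.trans Set.Ioo_subset_Icc_self), hgs, fun j => ?_⟩
  rw [intervalIntegral.integral_of_le zero_le_one, integral_Ioc_eq_integral_Ioo]
  have h1 := (ContinuousLinearMap.proj (R := ℂ) (φ := fun _ : Fin n => ℂ) j).integral_comp_comm hgi
  rw [hzero] at h1
  simpa [f', mul_comm] using h1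
end

section
/- Let n ≥ 1, N ≥ 1, and let f_1, …, f_n ∈ L¹(ℝ^N) be real-valued. Then there exists a real-valued function g ∈ C_c^∞(ℝ; ℝ) of one real variable such that ∫_{ℝ^N} f_j(x) e^{i g(x_1)} dx = 0 for all 1 ≤ j ≤ n, where x_1 denotes the first coordinate of x ∈ ℝ^N. -/
/-!
The idea is to oscillate: for a large frequency `k` the phase `g₀(x) = k x`, cut off far away,
makes all the integrals `∫ F_j e^{i g₀}` small by the Riemann–Lebesgue lemma, and a small
modulation of this phase at the same frequency can correct the remaining error exactly.

Fubini reduces the statement to integrable functions `F_j` on the line, and passing to a basis of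
their span in `L¹` one may assume them linearly independent. Then there are test functions `φ_l`
with `∫ φ_l F_j = δ_{lj}` (`exists_dual`). For `z ∈ ℂⁿ` put
`p_z(x) = 2 ∑ φ_l(x) Im (z_l e^{-ikx})` (`modulation`). Where some `φ_l` is nonzero `g₀(x) = k x`, so
`i e^{i g₀} p_z = ∑ (z_l φ_l - conj z_l φ_l e^{2ikx})`. Integrated against `F_j`, the first part gives
`z_j` and the second part is small, again by Riemann–Lebesgue. Hence
`Φ(z)_j = ∫ F_j e^{i (g₀ + p_z)}` is `Φ(0)` plus the identity plus a term with small Lipschitz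
constant near `0`, uniformly in `k`. As `Φ(0)` is as small as desired, the contraction principle
applied to `z ↦ z - Φ(z)` gives a zero of `Φ` (`exists_zero_of_near_id`, `exists_of_dual`).
-/

open MeasureTheory Complex

/-! ### Analytic preliminaries -/

/-- Riemann–Lebesgue lemma, normalised to the frequency `k → +∞` in `e^{ikx}`. -/
lemma tendsto_integral_mul_exp_s3 (F : ℝ → ℂ) :
    Filter.Tendsto (fun k : ℝ => ∫ x, F x * exp (I * (k * x : ℝ))) Filter.atTop (nhds 0) := by
  have h := (Real.tendsto_integral_exp_smul_cocompact F).mono_left atBot_le_cocompact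
  have h2 : Filter.Tendsto (fun k : ℝ => -(1 / (2 * Real.pi)) * k) Filter.atTop Filter.atBot := by
    apply Filter.Tendsto.const_mul_atTop_of_neg _ Filter.tendsto_id
    have := Real.pi_pos
    simp; positivity
  refine (h.comp h2).congr fun k => ?_
  simp only [Function.comp]
  congr 1
  ext x
  rw [Circle.smul_def, Real.fourierChar_apply, smul_eq_mul, mul_comm]
  congr 2
  have : (Real.pi : ℂ) ≠ 0 := by exact_mod_cast Real.pi_ne_zero
  push_cast
  field_simp

/-- Quadratic remainder bound: `t ↦ e^{it} - it` is `r`-Lipschitz on `[-r, r]`. -/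
lemma norm_exp_sub_exp_sub_le_s3 {r u v : ℝ} (hu : |u| ≤ r) (hv : |v| ≤ r) :
    ‖exp (I * u) - exp (I * v) - I * (u - v)‖ ≤ r * |u - v| := by
  have hd : ∀ t ∈ Set.Icc (-r) r, HasDerivWithinAt (fun t : ℝ => exp (I * t) - I * t)
      (exp (I * t) * I - I) (Set.Icc (-r) r) t := by
    intro t _
    have h1 : HasDerivAt (fun t : ℝ => I * (t : ℂ)) I t := by
      simpa using (Complex.ofRealCLM.hasDerivAt (x := t)).const_mul I
    exact (h1.cexp.sub h1).hasDerivWithinAt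
  have hb : ∀ t ∈ Set.Icc (-r) r, ‖exp (I * (t : ℂ)) * I - I‖ ≤ r := by
    intro t ht
    have : exp (I * (t : ℂ)) * I - I = (exp (I * t) - 1) * I := by ring
    rw [this, norm_mul, norm_I, mul_one]
    exact (Real.norm_exp_I_mul_ofReal_sub_one_le (x := t)).trans (by
      rw [Real.norm_eq_abs]; exact abs_le.2 ht)
  have := (convex_Icc (-r) r).norm_image_sub_le_of_norm_hasDerivWithin_le hd hb
    (abs_le.1 hv) (abs_le.1 hu)
  rw [Real.norm_eq_abs] at this
  have e : exp (I * u) - exp (I * v) - I * (u - v)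
      = (exp (I * u) - I * u) - (exp (I * v) - I * v) := by ring
  rw [e]
  exact this

/-! ### Dual test functions -/

/-- A linearly independent finite family in `L¹(ℝ)` has a dual family of test functions: a linear
form vanishing on all vectors `(∫ φ F_j)_j` would give a combination of the `F_j` orthogonal to every
test function, hence zero almost everywhere. -/
lemma exists_dual_s3 {ι : Type*} [Fintype ι] [DecidableEq ι] (F : ι → ℝ → ℝ)
    (hF : ∀ j, Integrable (F j))
    (hind : ∀ c : ι → ℝ, (∀ᵐ x, ∑ j, c j * F j x = 0) → c = 0) :
    ∃ φ : ι → ℝ → ℝ, (∀ l, ContDiff ℝ (⊤ : ℕ∞) (φ l)) ∧ (∀ l, HasCompactSupport (φ l)) ∧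
      ∀ l j, ∫ x, φ l x * F j x = if l = j then 1 else 0 := by
  have hint : ∀ φ : ℝ → ℝ, Continuous φ → HasCompactSupport φ → ∀ j,
      Integrable (fun x => φ x * F j x) := by
    intro φ h1 h2 j
    obtain ⟨C, hC⟩ := h2.exists_bound_of_continuous h1
    exact (hF j).bdd_mul h1.aestronglyMeasurable (Filter.Eventually.of_forall hC)
  let S : Submodule ℝ (ι → ℝ) :=
    { carrier := {v | ∃ φ : ℝ → ℝ, ContDiff ℝ (⊤ : ℕ∞) φ ∧ HasCompactSupport φ ∧
        ∀ j, ∫ x, φ x * F j x = v j}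
      zero_mem' := ⟨0, contDiff_const, HasCompactSupport.zero, by simp⟩
      add_mem' := by
        rintro v w ⟨φ, h1, h2, h3⟩ ⟨ψ, k1, k2, k3⟩
        refine ⟨φ + ψ, h1.add k1, h2.add k2, fun j => ?_⟩
        simp only [Pi.add_apply, add_mul]
        rw [integral_add (hint _ h1.continuous h2 j) (hint _ k1.continuous k2 j), h3, k3]
      smul_mem' := by
        rintro c v ⟨φ, h1, h2, h3⟩
        refine ⟨c • φ, contDiff_const.smul h1, h2.smul_left (f := fun _ => c), fun j => ?_⟩
        simp only [Pi.smul_apply, smul_eq_mul, mul_assoc]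
        rw [integral_const_mul, h3] }
  have hS : S = ⊤ := by
    by_contra hne
    obtain ⟨L, hL0, hL⟩ := S.exists_le_ker_of_lt_top (lt_top_iff_ne_top.2 hne)
    have hLv : ∀ v, L v = ∑ j, v j * L (Pi.single j 1) := fun v => by
      rw [LinearMap.pi_apply_eq_sum_univ L v]
      refine Finset.sum_congr rfl fun j _ => ?_
      rw [smul_eq_mul]
      congr 2
      ext i
      simp [Pi.single_apply, eq_comm]
    have hc : (fun j => L (Pi.single j 1)) = 0 := by
      apply hind
      refine ae_eq_zero_of_integral_contDiff_smul_eq_zero ?_ ?_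
      · exact (integrable_finsetSum _ fun j _ => (hF j).const_mul _).locallyIntegrable
      · intro φ h1 h2
        have hm : (fun j => ∫ x, φ x * F j x) ∈ S := ⟨φ, h1, h2, fun j => rfl⟩
        have h0 : L _ = 0 := hL hm
        rw [hLv] at h0
        rw [← h0]
        simp only [smul_eq_mul, Finset.mul_sum]
        rw [integral_finsetSum]
        · refine Finset.sum_congr rfl fun j _ => ?_
          rw [← integral_mul_const]
          congr 1; ext x; ring
        · intro j _
          simpa only [mul_left_comm] using
            (hint φ h1.continuous h2 j).const_mul (L (Pi.single j 1))
    apply hL0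
    ext v
    simpa using congrFun hc v
  have h : ∀ l, ∃ φ : ℝ → ℝ, ContDiff ℝ (⊤ : ℕ∞) φ ∧ HasCompactSupport φ ∧
        ∀ j, ∫ x, φ x * F j x = (if l = j then 1 else 0) := fun l => by
    have : (fun j => if l = j then (1:ℝ) else 0) ∈ S := hS ▸ Submodule.mem_top
    exact this
  choose φ h1 h2 h3 using h
  exact ⟨φ, h1, h2, h3⟩

/-! ### The carrier phase and its modulation -/

/-- A quantitative inverse function theorem: a map that differs from the identity by a
`1/2`-Lipschitz map on a ball, and whose value at the centre is small, has a zero. -/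
lemma exists_zero_of_near_id {E : Type*} [NormedAddCommGroup E] [CompleteSpace E] (Φ : E → E)
    {r : ℝ} (hr : 0 ≤ r) (h0 : ‖Φ 0‖ ≤ r / 2)
    (hΦ : ∀ z w, ‖z‖ ≤ r → ‖w‖ ≤ r → ‖(z - w) - (Φ z - Φ w)‖ ≤ 1 / 2 * ‖z - w‖) :
    ∃ z, Φ z = 0 := by
  let T : E → E := fun z => z - Φ z
  have hT : ∀ z w, ‖z‖ ≤ r → ‖w‖ ≤ r → ‖T z - T w‖ ≤ 1 / 2 * ‖z - w‖ := by
    intro z w hz hw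
    have : T z - T w = (z - w) - (Φ z - Φ w) := by simp only [T]; abel
    rw [this]
    exact hΦ z w hz hw
  have hmaps : Set.MapsTo T (Metric.closedBall 0 r) (Metric.closedBall 0 r) := by
    intro z hz
    rw [mem_closedBall_zero_iff] at hz ⊢
    have h1 := hT z 0 hz (by simpa using hr)
    have h2 : T 0 = - Φ 0 := by simp [T]
    have h3 : T z = (T z - T 0) + T 0 := by abel
    rw [h3]
    refine (norm_add_le _ _).trans ?_
    have h4 : ‖T 0‖ = ‖Φ 0‖ := by rw [h2, norm_neg]
    rw [sub_zero] at h1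
    linarith
  have hcon : ContractingWith (1 / 2) (hmaps.restrict T _ _) := by
    refine ⟨by rw [← NNReal.coe_lt_coe]; norm_num, LipschitzWith.of_dist_le_mul ?_⟩
    rintro ⟨z, hz⟩ ⟨w, hw⟩
    rw [mem_closedBall_zero_iff] at hz hw
    simpa [Subtype.dist_eq, dist_eq_norm] using hT z w hz hw
  obtain ⟨z, -, hz, -⟩ := hcon.exists_fixedPoint' Metric.isClosed_closedBall.isComplete hmaps
    (Metric.mem_closedBall_self hr) (edist_ne_top _ _)
  refine ⟨z, ?_⟩
  have : z - Φ z = z := hz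
  simpa using this

lemma integrable_mul_bdd {F : ℝ → ℂ} (hF : Integrable F) {u : ℝ → ℂ} (hu : Continuous u) {C : ℝ}
    (hC : ∀ x, ‖u x‖ ≤ C) : Integrable (fun x => F x * u x) :=
  hF.mul_bdd hu.aestronglyMeasurable (Filter.Eventually.of_forall hC)

lemma norm_exp_I_mul (t : ℝ) : ‖exp (I * t)‖ = 1 := by
  rw [mul_comm, norm_exp_ofReal_mul_I]

/-- The carrier phase: a compactly supported smooth `g` equal to `k x` on the supports of all `φ l`,
with `k` so large that the integrals of `F j e^{ig}` and the second harmonics are at most `ε`.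
The cut-off radius is chosen before `k`, so that the tails of the `F j` beyond it are negligible
whatever `k` is. -/
lemma exists_carrier {ι : Type*} [Finite ι] (F φ : ι → ℝ → ℝ) (hF : ∀ j, Integrable (F j))
    (hφ : ∀ l, HasCompactSupport (φ l)) {ε : ℝ} (hε : 0 < ε) :
    ∃ (k : ℝ) (g : ℝ → ℝ), ContDiff ℝ (⊤ : ℕ∞) g ∧ HasCompactSupport g ∧
      (∀ l x, φ l x ≠ 0 → g x = k * x) ∧
      (∀ j, ‖∫ x, (F j x : ℂ) * exp (I * g x)‖ ≤ ε) ∧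
      ∀ l j, ‖∫ x, ((φ l x * F j x : ℝ) : ℂ) * exp (I * (2 * k * x : ℝ))‖ ≤ ε := by
  have happ : ∀ j, ∃ G : ℝ → ℝ, HasCompactSupport G ∧ ∫ x, ‖F j x - G x‖ ≤ ε / 4 ∧
      Continuous G ∧ Integrable G := fun j =>
    (hF j).exists_hasCompactSupport_integral_sub_le (by positivity)
  choose G hG1 hG2 hG3 hG4 using happ
  -- a radius beyond which all `φ l` and all `G j` vanish
  have hR : ∃ R : ℝ, 0 < R ∧ ∀ l x, R < |x| → φ l x = 0 ∧ G l x = 0 := by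
    have h : ∀ l, ∃ R : ℝ, ∀ x, R < |x| → φ l x = 0 ∧ G l x = 0 := by
      intro l
      obtain ⟨R, hR⟩ := ((hφ l).isCompact.union (hG1 l).isCompact).isBounded.exists_norm_le
      refine ⟨R, fun x hx => ⟨?_, ?_⟩⟩
      · by_contra h
        exact absurd (hR x (Or.inl (subset_tsupport _ h))) (not_le.2 hx)
      · by_contra h
        exact absurd (hR x (Or.inr (subset_tsupport _ h))) (not_le.2 hx)
    choose R hR using h
    obtain ⟨M, hM⟩ := (Set.finite_range R).bddAbove
    refine ⟨max M 1, by positivity, fun l x hx => hR l x ?_⟩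
    exact ((hM ⟨l, rfl⟩).trans (le_max_left _ _)).trans_lt hx
  obtain ⟨R, hR0, hR⟩ := hR
  let χ : ContDiffBump (0 : ℝ) := ⟨R, R + 1, hR0, by linarith⟩
  have hχ : ∀ x, |x| ≤ R → χ x = 1 := fun x hx =>
    χ.one_of_mem_closedBall (by simpa using hx)
  have e1 : ∀ᶠ k : ℝ in Filter.atTop, ∀ j,
      ‖∫ x, (F j x : ℂ) * exp (I * (k * x : ℝ))‖ ≤ ε / 2 := by
    refine Filter.eventually_all.2 fun j => ?_
    have := (tendsto_integral_mul_exp_s3 (fun x => (F j x : ℂ))).norm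
    rw [norm_zero] at this
    exact (this.eventually_lt_const (half_pos hε)).mono fun k hk => hk.le
  have e2 : ∀ᶠ k : ℝ in Filter.atTop, ∀ l j,
      ‖∫ x, ((φ l x * F j x : ℝ) : ℂ) * exp (I * (2 * k * x : ℝ))‖ ≤ ε := by
    refine Filter.eventually_all.2 fun l => Filter.eventually_all.2 fun j => ?_
    have := ((tendsto_integral_mul_exp_s3 (fun x => ((φ l x * F j x : ℝ) : ℂ))).comp
      (Filter.tendsto_id.const_mul_atTop (two_pos : (0 : ℝ) < 2))).norm
    rw [norm_zero] at this
    exact (this.eventually_lt_const hε).mono fun k hk => hk.le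
  obtain ⟨k, hk1, hk2⟩ := (e1.and e2).exists
  have hg : ContDiff ℝ (⊤ : ℕ∞) (fun x => χ x * (k * x)) :=
    χ.contDiff.mul (contDiff_const.mul contDiff_id)
  refine ⟨k, fun x => χ x * (k * x), hg, χ.hasCompactSupport.mul_right, ?_, ?_, hk2⟩
  · intro l x hx
    have : |x| ≤ R := by
      by_contra h
      exact hx (hR l x (not_le.1 h)).1
    simp only [hχ x this, one_mul]
  · intro j
    have i1 : Integrable fun x => (F j x : ℂ) * exp (I * (k * x : ℝ)) :=
      integrable_mul_bdd (hF j).ofReal (by fun_prop) fun x => (norm_exp_I_mul _).le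
    have i2 : Integrable fun x => (F j x : ℂ) * exp (I * (χ x * (k * x) : ℝ)) :=
      integrable_mul_bdd (hF j).ofReal
        (by have := hg.continuous; fun_prop) fun x => (norm_exp_I_mul _).le
    have hd : ‖∫ x, ((F j x : ℂ) * exp (I * (χ x * (k * x) : ℝ))
        - (F j x : ℂ) * exp (I * (k * x : ℝ)))‖ ≤ ε / 2 := by
      calc _ ≤ ∫ x, 2 * ‖F j x - G j x‖ := by
            refine norm_integral_le_of_norm_le (((hF j).sub (hG4 j)).norm.const_mul 2)
              (Filter.Eventually.of_forall fun x => ?_)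
            rw [← mul_sub, norm_mul]
            rcases le_or_gt |x| R with h | h
            · rw [hχ x h]
              simp
            · rw [(hR j x h).2, sub_zero, mul_comm, norm_real]
              gcongr
              refine (norm_sub_le _ _).trans ?_
              rw [norm_exp_I_mul, norm_exp_I_mul]
              norm_num
        _ ≤ ε / 2 := by
            rw [integral_const_mul]
            linarith [hG2 j]
    rw [integral_sub i2 i1] at hd
    have := norm_le_norm_sub_add (∫ x, (F j x : ℂ) * exp (I * (χ x * (k * x) : ℝ)))
      (∫ x, (F j x : ℂ) * exp (I * (k * x : ℝ)))
    linarith [hk1 j]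

/-- The modulation `p_z(x) = 2 ∑ φ_l(x) Im (z_l e^{-ikx})` of the carrier phase `k x`, which is
real-linear in the parameter `z ∈ ℂ^ι`. -/
noncomputable def modulation {ι : Type*} [Fintype ι] (φ : ι → ℝ → ℝ) (k : ℝ)
    (z : ι → ℂ) (x : ℝ) : ℝ :=
  ∑ l, φ l x * (2 * (z l * exp (-(I * (k * x : ℝ)))).im)

lemma modulation_sub {ι : Type*} [Fintype ι] (φ : ι → ℝ → ℝ) (k : ℝ) (z w : ι → ℂ) (x : ℝ) :
    modulation φ k (z - w) x = modulation φ k z x - modulation φ k w x := by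
  simp only [modulation, Pi.sub_apply, sub_mul, sub_im, mul_sub, Finset.sum_sub_distrib]

lemma abs_modulation_le {ι : Type*} [Fintype ι] (φ : ι → ℝ → ℝ) {M : ℝ} (hM : ∀ l x, |φ l x| ≤ M)
    (k : ℝ) (z : ι → ℂ) (x : ℝ) :
    |modulation φ k z x| ≤ 2 * Fintype.card ι * M * ‖z‖ := by
  have h : ∀ l ∈ Finset.univ,
      |φ l x * (2 * (z l * exp (-(I * (k * x : ℝ)))).im)| ≤ M * (2 * ‖z‖) := by
    intro l _
    have h1 := abs_im_le_norm (z l * exp (-(I * (k * x : ℝ))))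
    have h3 : -(I * ((k * x : ℝ) : ℂ)) = I * ((-(k * x) : ℝ) : ℂ) := by push_cast; ring
    rw [norm_mul, h3, norm_exp_I_mul, mul_one, ← h3] at h1
    have h2 := norm_le_pi_norm z l
    have h4 := (abs_nonneg _).trans (hM l x)
    rw [abs_mul, abs_mul, abs_two]
    have := hM l x
    gcongr
    exact h1.trans h2
  refine (Finset.abs_sum_le_sum_abs _ _).trans ((Finset.sum_le_sum h).trans (le_of_eq ?_))
  simp
  ring

/-- First-order effect of the modulation on `e^{iy}`, where the carrier phase `y` equals `k x`
wherever some `φ l` is nonzero: a non-oscillating part `∑ z_l φ_l` and a second harmonic. -/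
lemma I_mul_exp_mul_modulation {ι : Type*} [Fintype ι] (φ : ι → ℝ → ℝ) (k : ℝ) (z : ι → ℂ)
    (x y : ℝ) (hy : ∀ l, φ l x ≠ 0 → y = k * x) :
    exp (I * y) * (I * (modulation φ k z x : ℂ)) =
      ∑ l, (z l * φ l x - (starRingEnd ℂ) (z l) * (φ l x * exp (I * (2 * k * x : ℝ)))) := by
  rw [modulation, ofReal_sum, Finset.mul_sum, Finset.mul_sum]
  refine Finset.sum_congr rfl fun l _ => ?_
  by_cases h : φ l x = 0
  · simp [h]
  rw [hy l h]
  set e := exp (I * (k * x : ℝ)) with he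
  have h1 : exp (-(I * (k * x : ℝ))) = e⁻¹ := exp_neg _
  have h2 : exp (I * (2 * k * x : ℝ)) = e * e := by
    rw [he, ← exp_add]; congr 1; push_cast; ring
  have h3 : (starRingEnd ℂ) e⁻¹ = e := by
    rw [← h1, ← exp_conj, he]; simp
  have h4 : e ≠ 0 := exp_ne_zero _
  have h5 : ((2 * (z l * e⁻¹).im : ℝ) : ℂ) * I = z l * e⁻¹ - (starRingEnd ℂ) (z l) * e := by
    have := sub_conj (z l * e⁻¹)
    rw [map_mul, h3] at this
    rw [this]
  rw [h1, h2, ofReal_mul]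
  calc e * (I * (φ l x * ((2 * (z l * e⁻¹).im : ℝ) : ℂ)))
      = φ l x * e * (((2 * (z l * e⁻¹).im : ℝ) : ℂ) * I) := by ring
    _ = _ := by rw [h5]; field_simp

lemma contDiff_modulation {ι : Type*} [Fintype ι] {φ : ι → ℝ → ℝ}
    (hφ : ∀ l, ContDiff ℝ (⊤ : ℕ∞) (φ l)) (k : ℝ) (z : ι → ℂ) :
    ContDiff ℝ (⊤ : ℕ∞) (modulation φ k z) := by
  refine ContDiff.sum fun l _ => (hφ l).mul (contDiff_const.mul ?_)
  refine Complex.imCLM.contDiff.comp (contDiff_const.mul (ContDiff.cexp ?_))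
  exact (contDiff_const.mul (Complex.ofRealCLM.contDiff.comp (contDiff_const.mul contDiff_id))).neg

lemma hasCompactSupport_modulation {ι : Type*} [Fintype ι] {φ : ι → ℝ → ℝ}
    (hφ : ∀ l, HasCompactSupport (φ l)) (k : ℝ) (z : ι → ℂ) :
    HasCompactSupport (modulation φ k z) := by
  refine HasCompactSupport.of_support_subset_isCompact
    (isCompact_iUnion fun l => (hφ l).isCompact) fun x hx => ?_
  rw [Function.mem_support, modulation] at hx
  obtain ⟨l, -, hl⟩ := Finset.exists_ne_zero_of_sum_ne_zero hx
  exact Set.mem_iUnion.2 ⟨l, subset_tsupport _ (left_ne_zero_of_mul hl)⟩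

/-! ### The fixed-point argument and the reductions -/

/-- The theorem on the line for a family admitting dual test functions. -/
lemma exists_of_dual {ι : Type*} [Fintype ι] [DecidableEq ι] (F φ : ι → ℝ → ℝ)
    (hF : ∀ j, Integrable (F j)) (hφ : ∀ l, ContDiff ℝ (⊤ : ℕ∞) (φ l))
    (hφc : ∀ l, HasCompactSupport (φ l))
    (hdual : ∀ l j, ∫ x, φ l x * F j x = if l = j then 1 else 0) :
    ∃ g : ℝ → ℝ, ContDiff ℝ (⊤ : ℕ∞) g ∧ HasCompactSupport g ∧
      ∀ j, ∫ x, (F j x : ℂ) * exp (I * g x) = 0 := by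
  obtain ⟨M, hM0, hM⟩ : ∃ M : ℝ, 0 ≤ M ∧ ∀ l x, |φ l x| ≤ M := by
    choose C hC using fun l => (hφc l).exists_bound_of_continuous (hφ l).continuous
    obtain ⟨M, hM⟩ := (Set.finite_range C).bddAbove
    exact ⟨max M 0, le_max_right _ _, fun l x =>
      (hC l x).trans ((hM ⟨l, rfl⟩).trans (le_max_left _ _))⟩
  obtain ⟨C, hC0, hC⟩ : ∃ C : ℝ, 0 ≤ C ∧ ∀ j, ∫ x, ‖F j x‖ ≤ C := by
    obtain ⟨C, hC⟩ := (Set.finite_range fun j => ∫ x, ‖F j x‖).bddAbove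
    exact ⟨max C 0, le_max_right _ _, fun j => (hC ⟨j, rfl⟩).trans (le_max_left _ _)⟩
  set d : ℝ := (Fintype.card ι : ℝ) with hd
  have hd0 : 0 ≤ d := Nat.cast_nonneg _
  set B : ℝ := 2 * d * M with hB
  have hB0 : 0 ≤ B := by positivity
  obtain ⟨r, hr0, hr⟩ : ∃ r : ℝ, 0 < r ∧ C * B ^ 2 * r ≤ 1 / 4 := by
    refine ⟨1 / (4 * (C * B ^ 2 + 1)), by positivity, ?_⟩
    rw [mul_one_div, div_le_iff₀ (by positivity)]
    nlinarith [mul_nonneg hC0 (sq_nonneg B)]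
  obtain ⟨ε, hε0, hε1, hε2⟩ : ∃ ε : ℝ, 0 < ε ∧ ε ≤ r / 2 ∧ d * ε ≤ 1 / 4 := by
    refine ⟨min (r / 2) (1 / (4 * (d + 1))), by positivity, min_le_left _ _, ?_⟩
    calc d * min (r / 2) (1 / (4 * (d + 1))) ≤ d * (1 / (4 * (d + 1))) := by
          gcongr; exact min_le_right _ _
      _ ≤ 1 / 4 := by
          rw [mul_one_div, div_le_iff₀ (by positivity)]
          linarith
  obtain ⟨k, g, hg, hgc, hgk, hg1, hg2⟩ := exists_carrier F φ hF hφc hε0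
  have hpc : ∀ z, Continuous (modulation φ k z) := fun z => (contDiff_modulation hφ k z).continuous
  have hgcont := hg.continuous
  let Φ : (ι → ℂ) → ι → ℂ := fun z j => ∫ x, (F j x : ℂ) * exp (I * (g x + modulation φ k z x : ℝ))
  -- the linearisation of `Φ` at `0` is the identity up to the second harmonics
  have hlin : ∀ z j, ∫ x, (F j x : ℂ) * (exp (I * g x) * (I * modulation φ k z x)) =
      z j - ∑ l, (starRingEnd ℂ) (z l) *
        ∫ x, ((φ l x * F j x : ℝ) : ℂ) * exp (I * (2 * k * x : ℝ)) := by
    intro z j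
    have hφF : ∀ l, Integrable fun x => ((φ l x * F j x : ℝ) : ℂ) := fun l =>
      ((hF j).bdd_mul (hφ l).continuous.aestronglyMeasurable
        (Filter.Eventually.of_forall (hM l))).ofReal
    have hφFe : ∀ l, Integrable fun x =>
        ((φ l x * F j x : ℝ) : ℂ) * exp (I * (2 * k * x : ℝ)) := fun l =>
      integrable_mul_bdd (hφF l) (by fun_prop) fun x => (norm_exp_I_mul _).le
    calc _ = ∫ x, ∑ l, (z l * ((φ l x * F j x : ℝ) : ℂ) - (starRingEnd ℂ) (z l) *
          (((φ l x * F j x : ℝ) : ℂ) * exp (I * (2 * k * x : ℝ)))) := by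
          congr 1
          ext x
          rw [I_mul_exp_mul_modulation φ k z x (g x) fun l => hgk l x, Finset.mul_sum]
          refine Finset.sum_congr rfl fun l _ => ?_
          push_cast
          ring
      _ = ∑ l, (z l * ∫ x, ((φ l x * F j x : ℝ) : ℂ)) - ∑ l, (starRingEnd ℂ) (z l) *
          ∫ x, ((φ l x * F j x : ℝ) : ℂ) * exp (I * (2 * k * x : ℝ)) := by
          rw [integral_finsetSum, ← Finset.sum_sub_distrib]
          swap
          · exact fun l _ => ((hφF l).const_mul _).sub ((hφFe l).const_mul _)
          refine Finset.sum_congr rfl fun l _ => ?_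
          rw [integral_sub ((hφF l).const_mul _) ((hφFe l).const_mul _), integral_const_mul,
            integral_const_mul]
      _ = _ := by
          have h1 : ∀ l, ∫ x, ((φ l x * F j x : ℝ) : ℂ) = if l = j then 1 else 0 := fun l => by
            rw [integral_complex_ofReal, hdual]
            split_ifs <;> simp
          simp only [h1]
          simp
  obtain ⟨z, hz⟩ := exists_zero_of_near_id Φ hr0.le
    ((pi_norm_le_iff_of_nonneg (by positivity)).2 fun j => by
      have h0 : ∀ x, modulation φ k 0 x = 0 := fun x => by simp [modulation]
      simp only [Φ, h0, add_zero]
      exact (hg1 j).trans hε1) (by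
    intro z w hz hw
    refine (pi_norm_le_iff_of_nonneg (by positivity)).2 fun j => ?_
    have iexp : ∀ z, Integrable fun x =>
        (F j x : ℂ) * exp (I * (g x + modulation φ k z x : ℝ)) := fun z =>
      integrable_mul_bdd (hF j).ofReal (by have := hpc z; fun_prop) fun x => (norm_exp_I_mul _).le
    have ilin : Integrable fun x =>
        (F j x : ℂ) * (exp (I * g x) * (I * modulation φ k (z - w) x)) := by
      refine integrable_mul_bdd (C := B * ‖z - w‖) (hF j).ofReal
        (by have := hpc (z - w); fun_prop) fun x => ?_
      rw [norm_mul, norm_mul, norm_exp_I_mul, norm_I, one_mul, one_mul, norm_real]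
      exact abs_modulation_le φ hM k _ x
    have hquad : ‖∫ x, ((F j x : ℂ) * exp (I * (g x + modulation φ k z x : ℝ))
        - (F j x : ℂ) * exp (I * (g x + modulation φ k w x : ℝ))
        - (F j x : ℂ) * (exp (I * g x) * (I * modulation φ k (z - w) x)))‖
        ≤ 1 / 4 * ‖z - w‖ := by
      calc _ ≤ ∫ x, ‖F j x‖ * ((B * r) * (B * ‖z - w‖)) := by
            refine norm_integral_le_of_norm_le ((hF j).norm.mul_const _)
              (Filter.Eventually.of_forall fun x => ?_)
            have hs : ∀ z, exp (I * (g x + modulation φ k z x : ℝ))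
                = exp (I * g x) * exp (I * modulation φ k z x) := fun z => by
              rw [← exp_add]; congr 1; push_cast; ring
            have e : (F j x : ℂ) * exp (I * (g x + modulation φ k z x : ℝ))
                - (F j x : ℂ) * exp (I * (g x + modulation φ k w x : ℝ))
                - (F j x : ℂ) * (exp (I * g x) * (I * modulation φ k (z - w) x))
                = (F j x : ℂ) * (exp (I * g x) * (exp (I * modulation φ k z x)
                  - exp (I * modulation φ k w x)
                  - I * (modulation φ k z x - modulation φ k w x))) := by
              rw [hs, hs, modulation_sub]; push_cast; ring
            rw [e, norm_mul, norm_mul, norm_exp_I_mul, one_mul, norm_real]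
            gcongr
            refine (norm_exp_sub_exp_sub_le_s3 (r := B * r)
              ((abs_modulation_le φ hM k z x).trans (by gcongr))
              ((abs_modulation_le φ hM k w x).trans (by gcongr))).trans ?_
            rw [← modulation_sub]
            gcongr
            exact abs_modulation_le φ hM k _ x
        _ = (∫ x, ‖F j x‖) * (B ^ 2 * r * ‖z - w‖) := by
            rw [integral_mul_const]; ring
        _ ≤ C * (B ^ 2 * r * ‖z - w‖) := by
            gcongr
            exact hC j
        _ = C * B ^ 2 * r * ‖z - w‖ := by ring
        _ ≤ _ := by gcongr
    have isub : Integrable fun x => (F j x : ℂ) * exp (I * (g x + modulation φ k z x : ℝ))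
        - (F j x : ℂ) * exp (I * (g x + modulation φ k w x : ℝ)) := (iexp z).sub (iexp w)
    rw [integral_sub isub ilin, integral_sub (iexp z) (iexp w), hlin] at hquad
    have hosc : ‖∑ l, (starRingEnd ℂ) ((z - w) l) *
        ∫ x, ((φ l x * F j x : ℝ) : ℂ) * exp (I * (2 * k * x : ℝ))‖ ≤ 1 / 4 * ‖z - w‖ := by
      calc _ ≤ ∑ l : ι, ‖z - w‖ * ε := by
            refine norm_sum_le_of_le _ fun l _ => ?_
            rw [norm_mul, RCLike.norm_conj]
            gcongr
            · exact norm_le_pi_norm (z - w) l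
            · exact hg2 l j
        _ = d * ε * ‖z - w‖ := by
            simp [hd]; ring
        _ ≤ _ := by gcongr
    set S := ∑ l, (starRingEnd ℂ) ((z - w) l) *
        ∫ x, ((φ l x * F j x : ℝ) : ℂ) * exp (I * (2 * k * x : ℝ))
    have e : ((z - w) - (Φ z - Φ w)) j = S - (Φ z j - Φ w j - ((z - w) j - S)) := by
      simp only [Pi.sub_apply]; ring
    rw [e]
    refine (norm_sub_le _ _).trans ?_
    have := add_le_add hosc hquad
    refine this.trans (le_of_eq ?_)
    ring)
  refine ⟨fun x => g x + modulation φ k z x, hg.add (contDiff_modulation hφ k z),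
    hgc.add (hasCompactSupport_modulation hφc k z), fun j => congrFun hz j⟩

/-- The theorem on the line; a basis of the span of the `F j` in `L¹` replaces the family, as
linear independence is needed for dual test functions. -/
lemma hobby_rice_real {n : ℕ} (F : Fin n → ℝ → ℝ) (hF : ∀ j, Integrable (F j)) :
    ∃ g : ℝ → ℝ, ContDiff ℝ (⊤ : ℕ∞) g ∧ HasCompactSupport g ∧
      ∀ j, ∫ x, (F j x : ℂ) * exp (I * g x) = 0 := by
  let V : Submodule ℝ (ℝ →₁[volume] ℝ) := Submodule.span ℝ (Set.range fun j => (hF j).toL1 (F j))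
  have : FiniteDimensional ℝ V := FiniteDimensional.span_of_finite ℝ (Set.finite_range _)
  let b := Module.finBasis ℝ V
  have hsum : ∀ (c : Fin (Module.finrank ℝ V) → ℝ),
      ((∑ i, c i • b i : V) : ℝ →₁[volume] ℝ) =ᵐ[volume] fun x =>
        ∑ i, c i * (b i : ℝ →₁[volume] ℝ) x := by
    intro c
    have h0 : ((∑ i, c i • b i : V) : ℝ →₁[volume] ℝ)
        = ∑ i, c i • (b i : ℝ →₁[volume] ℝ) := by
      rw [Submodule.coe_sum]
      rfl
    rw [h0]
    have h1 := Lp.coeFn_finsetSum Finset.univ fun i => c i • (b i : ℝ →₁[volume] ℝ)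
    have h2 : ∀ᵐ x, ∀ i, (c i • (b i : ℝ →₁[volume] ℝ) : ℝ →₁[volume] ℝ) x
        = c i * (b i : ℝ →₁[volume] ℝ) x :=
      ae_all_iff.2 fun i => Lp.coeFn_smul _ _
    filter_upwards [h1, h2] with x h1 h2
    rw [h1]
    simp [h2]
  obtain ⟨φ, hφ, hφc, hdual⟩ := exists_dual_s3 (fun i => ((b i : ℝ →₁[volume] ℝ) : ℝ → ℝ))
    (fun i => L1.integrable_coeFn _) (by
      intro c hc
      have h0 : ∑ i, c i • b i = 0 := by
        apply Subtype.ext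
        apply Lp.ext
        filter_upwards [hsum c, hc, Lp.coeFn_zero ℝ 1 volume] with x h1 h2 h3
        rw [h1, h2]
        exact h3.symm
      exact funext (Fintype.linearIndependent_iff.1 b.linearIndependent c h0))
  obtain ⟨g, hg, hgc, h⟩ := exists_of_dual _ φ (fun i => L1.integrable_coeFn _) hφ hφc hdual
  refine ⟨g, hg, hgc, fun j => ?_⟩
  let v : V := ⟨(hF j).toL1 (F j), Submodule.subset_span ⟨j, rfl⟩⟩
  have hv : F j =ᵐ[volume] fun x => ∑ i, b.repr v i * (b i : ℝ →₁[volume] ℝ) x := by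
    have := hsum (b.repr v)
    rw [b.sum_repr v] at this
    exact (Integrable.coeFn_toL1 (hF j)).symm.trans this
  have hgcont := hg.continuous
  calc _ = ∫ x, ∑ i, (b.repr v i : ℂ) * (((b i : ℝ →₁[volume] ℝ) x : ℂ) * exp (I * g x)) := by
        refine integral_congr_ae (hv.mono fun x hx => ?_)
        simp only [hx]
        push_cast
        rw [Finset.sum_mul]
        exact Finset.sum_congr rfl fun i _ => mul_assoc _ _ _
    _ = ∑ i, ∫ x, (b.repr v i : ℂ) * (((b i : ℝ →₁[volume] ℝ) x : ℂ) * exp (I * g x)) := by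
        refine integral_finsetSum _ fun i _ => Integrable.const_mul ?_ _
        exact integrable_mul_bdd (L1.integrable_coeFn _).ofReal (by fun_prop)
          fun x => (norm_exp_I_mul _).le
    _ = 0 := by
        refine Finset.sum_eq_zero fun i _ => ?_
        rw [integral_const_mul, h i, mul_zero]

/-- Smooth Hobby–Rice theorem on `ℝ^N`: for `n ≥ 1` real-valued integrable functions on
`ℝ^N` (`N ≥ 1`), there is a real-valued `g ∈ C_c^∞(ℝ; ℝ)` of one variable such that
`∫_{ℝ^N} f_j(x) e^{i g(x₁)} dx = 0` for all `j`, where `x₁` is the first coordinate. -/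
theorem smooth_hobby_rice_rN (n N : ℕ) (hn : 1 ≤ n) (hN : 1 ≤ N)
    (f : Fin n → (Fin N → ℝ) → ℝ) (hf : ∀ j, Integrable (f j)) :
    ∃ g : ℝ → ℝ, ContDiff ℝ (⊤ : ℕ∞) g ∧ HasCompactSupport g ∧
      ∀ j, ∫ x : Fin N → ℝ, (f j x : ℂ) * Complex.exp (Complex.I * g (x ⟨0, hN⟩)) = 0 := by
  obtain ⟨m, rfl⟩ : ∃ m, N = m + 1 := ⟨N - 1, by omega⟩
  let e := MeasurableEquiv.piFinSuccAbove (fun _ : Fin (m + 1) => ℝ) 0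
  have he : MeasurePreserving e := volume_preserving_piFinSuccAbove (fun _ => ℝ) 0
  have hint : ∀ j, Integrable (fun p => f j (e.symm p)) := fun j =>
    (he.symm e).integrable_comp_of_integrable (hf j)
  obtain ⟨g, hg, hgc, h⟩ := hobby_rice_real (fun j t => ∫ y, f j (e.symm (t, y)))
    fun j => (hint j).integral_prod_left
  refine ⟨g, hg, hgc, fun j => ?_⟩
  have hgcont := hg.continuous
  rw [← h j, ← (he.symm e).integral_comp e.symm.measurableEmbedding]
  have h0 : ∀ p, e.symm p ⟨0, hN⟩ = p.1 := fun p => rfl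
  simp only [h0]
  have hi : Integrable fun p => (f j (e.symm p) : ℂ) * exp (I * g p.1) :=
    (hint j).ofReal.mul_bdd (c := 1)
      (Continuous.aestronglyMeasurable (by fun_prop))
      (Filter.Eventually.of_forall fun p => (norm_exp_I_mul _).le)
  rw [Measure.volume_eq_prod, integral_prod _ hi]
  congr 1
  ext t
  simp only
  rw [integral_mul_const, integral_complex_ofReal]
end

section
/- Let n ≥ 1, let 0 < p ≤ 1, let f_1, …, f_n ∈ L¹([0,p]) be real-valued and linearly independent almost everywhere on [0,p], and let w : [0,p] → {−1, 1} be a Lebesgue-measurable function. Then there exist real-valued functions h_1, …, h_n ∈ C_c^∞((0,p); ℝ) such that the n×n real matrix M with entries M_{jk} = ∫_0^p f_j(x) h_k(x) w(x) dx is invertible (has nonzero determinant). -/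
open MeasureTheory Complex

/-!
Pair a test function `h` with the vector `v h = (∫ f_j h w)_j ∈ ℝⁿ`. If these vectors did not span
`ℝⁿ`, some nonzero functional `a` would vanish on all of them, that is, `(∑ a_j f_j) w` would
integrate to zero against every test function on `(0,p)`. By the fundamental lemma of the calculus
of variations `(∑ a_j f_j) w = 0` a.e. there, and since `w = ±1` this contradicts the linear
independence of the `f_j`. So the `v h` span, a basis of `ℝⁿ` can be extracted from them, and the
matrix having that basis as columns is invertible.
-/

/-- A spanning set of vectors in `ℝⁿ` contains the columns of an invertible matrix. -/
lemma exists_det_ne_zero_of_span_eq_top {n : ℕ} {S : Set (Fin n → ℝ)}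
    (hS : Submodule.span ℝ S = ⊤) :
    ∃ v : Fin n → Fin n → ℝ, (∀ k, v k ∈ S) ∧ (Matrix.of fun j k => v k j).det ≠ 0 := by
  let b := Module.Basis.ofSpan hS.ge
  let e := b.indexEquiv (Pi.basisFun ℝ (Fin n))
  refine ⟨b.reindex e, fun k => ?_, ?_⟩
  · rw [Module.Basis.reindex_apply]
    exact Module.Basis.ofSpan_subset hS.ge (Set.mem_range_self _)
  · have h : LinearIndependent ℝ (Matrix.of fun j k => (b.reindex e) k j).col :=
      (b.reindex e).linearIndependent
    rw [Matrix.linearIndependent_cols_iff_isUnit, Matrix.isUnit_iff_isUnit_det] at h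
    exact h.ne_zero

/-- Existence of smooth test functions making the matrix `M_{jk} = ∫_0^p f_j h_k w`
invertible, for `f_1, …, f_n` integrable and linearly independent a.e. on `[0,p]` and any
measurable sign function `w : [0,p] → {−1, 1}`. -/
theorem exists_smooth_test_functions_det_ne_zero (n : ℕ) (hn : 1 ≤ n) (p : ℝ)
    (hp : 0 < p) (hp1 : p ≤ 1) (f : Fin n → ℝ → ℝ)
    (hf : ∀ j, IntegrableOn (f j) (Set.Icc 0 p))
    (hindep : ∀ a : Fin n → ℝ,
      (∀ᵐ x ∂(volume.restrict (Set.Icc 0 p)), ∑ j, a j * f j x = 0) → a = 0)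
    (w : ℝ → ℝ) (hw : Measurable w) (hw1 : ∀ x ∈ Set.Icc (0:ℝ) p, w x = -1 ∨ w x = 1) :
    ∃ h : Fin n → ℝ → ℝ,
      (∀ k, ContDiff ℝ (⊤ : ℕ∞) (h k) ∧ HasCompactSupport (h k) ∧ tsupport (h k) ⊆ Set.Ioo 0 p) ∧
      (Matrix.of fun j k : Fin n => ∫ x in (0:ℝ)..p, f j x * h k x * w x).det ≠ 0 := by
  let S : Set (Fin n → ℝ) := {v | ∃ h : ℝ → ℝ,
    (ContDiff ℝ (⊤ : ℕ∞) h ∧ HasCompactSupport h ∧ tsupport h ⊆ Set.Ioo 0 p) ∧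
      v = fun j => ∫ x in (0:ℝ)..p, f j x * h x * w x}
  have hfw : ∀ j, IntegrableOn (fun x => f j x * w x) (Set.Icc 0 p) := fun j => by
    refine (hf j).mul_bdd (c := 1) hw.aestronglyMeasurable ?_
    filter_upwards [ae_restrict_mem measurableSet_Icc] with x hx
    rcases hw1 x hx with h | h <;> simp [h]
  have hS : Submodule.span ℝ S = ⊤ := by
    by_contra hne
    obtain ⟨φ, hφ, hle⟩ := Submodule.exists_le_ker_of_lt_top _ (lt_top_iff_ne_top.2 hne)
    let a : Fin n → ℝ := fun j => φ (Pi.single j 1)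
    have hφa : ∀ v, φ v = ∑ j, a j * v j := fun v => by
      rw [LinearMap.pi_apply_eq_sum_univ φ v]
      refine Finset.sum_congr rfl fun j _ => ?_
      have : (fun i => if j = i then (1:ℝ) else 0) = Pi.single j 1 := by
        ext i; simp [Pi.single_apply, eq_comm]
      rw [this, smul_eq_mul, mul_comm]
    have hF : IntegrableOn (fun x => ∑ j, a j * (f j x * w x)) (Set.Icc 0 p) :=
      integrable_finsetSum _ fun j _ => (hfw j).const_mul (a j)
    have hae : ∀ᵐ x, x ∈ Set.Ioo 0 p → ∑ j, a j * (f j x * w x) = 0 :=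
      isOpen_Ioo.ae_eq_zero_of_integral_contDiff_smul_eq_zero (μ := volume)
        (hF.mono_set Set.Ioo_subset_Icc_self).locallyIntegrableOn (fun g g1 g2 g3 => by
        have hk : φ (fun j => ∫ x in (0:ℝ)..p, f j x * g x * w x) = 0 :=
          hle (Submodule.subset_span ⟨g, ⟨g1, g2, g3⟩, rfl⟩)
        obtain ⟨C, hC⟩ := g1.continuous.bounded_above_of_compact_support g2
        have hg : ∀ x, x ∉ Set.Ioc 0 p → g x • (∑ j, a j * (f j x * w x)) = 0 := fun x hx => by
          have : g x = 0 := image_eq_zero_of_notMem_tsupport fun h =>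
            hx (Set.Ioo_subset_Ioc_self (g3 h))
          simp [this]
        refine Eq.trans ?_ hk
        rw [← setIntegral_eq_integral_of_forall_compl_eq_zero hg, hφa]
        simp_rw [intervalIntegral.integral_of_le hp.le, ← integral_const_mul]
        rw [← integral_finsetSum]
        · refine setIntegral_congr_fun measurableSet_Ioc fun x _ => ?_
          simp only [smul_eq_mul, Finset.mul_sum]
          exact Finset.sum_congr rfl fun j _ => by ring
        · intro j _
          have := ((hfw j).mono_set Set.Ioc_subset_Icc_self).mul_bdd (c := C)
            g1.continuous.aestronglyMeasurable (.of_forall hC)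
          refine Integrable.const_mul (this.congr (.of_forall fun x => ?_)) _
          simp only
          ring)
    have ha : a = 0 := by
      apply hindep
      rw [← Measure.restrict_congr_set Ioo_ae_eq_Icc, ae_restrict_iff' measurableSet_Ioo]
      filter_upwards [hae] with x hx hxm
      have h0 := hx hxm
      simp_rw [← mul_assoc, ← Finset.sum_mul] at h0
      refine (mul_eq_zero.1 h0).resolve_right ?_
      rcases hw1 x (Set.Ioo_subset_Icc_self hxm) with h | h <;> simp [h]
    exact hφ (LinearMap.ext fun v => by simp [hφa, ha])
  obtain ⟨v, hv, hdet⟩ := exists_det_ne_zero_of_span_eq_top hS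
  choose h hh hvh using hv
  refine ⟨h, hh, ?_⟩
  simp_rw [hvh] at hdet
  exact hdet
end

section
/- Let n ≥ 1 and let f_1, …, f_n be Lebesgue-measurable real-valued functions on [0,1]. Then exactly one of the following two cases holds: (1) there exists p ∈ (0,1) such that f_1, …, f_n are linearly independent almost everywhere on [0,p] and linearly independent almost everywhere on [p,1]; (2) there exists q ∈ [0,1] such that f_1, …, f_n are linearly dependent almost everywhere on [0,q] and linearly dependent almost everywhere on [q,1]. -/
/-!
Call `f` dependent on a set `s` if some nonzero linear combination vanishes a.e. on `s`. Dependence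
passes to subsets, which makes the two cases exclusive: one of `p ≤ q`, `q ≤ p` holds.

For existence, let `q` be the supremum of the `t ∈ [0,1]` with `f` dependent on `[0,t]`. Dependence
survives increasing countable unions (`DepOn.iUnion`), because the spaces of annihilating
coefficient vectors form a decreasing sequence of subspaces of `ℝⁿ`, which stabilizes. Hence `f` is
dependent on `[0,q]`. If no `p` as in the first case exists, then for every `p ∈ (q,1)` the
independence on `[0,p]` forces dependence on `[p,1]`; letting `p` decrease to `q` gives
dependence on `[q,1]`.
-/

open MeasureTheory

/-- The coefficient vectors whose linear combination of the `f j` vanishes a.e. on `s`. -/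
def annihilator {n : ℕ} (f : Fin n → ℝ → ℝ) (s : Set ℝ) : Submodule ℝ (Fin n → ℝ) where
  carrier := {a | ∀ᵐ x ∂(volume.restrict s), ∑ j, a j * f j x = 0}
  zero_mem' := by simp
  add_mem' := by
    intro a b ha hb
    rw [Set.mem_ofPred_eq] at *
    filter_upwards [ha, hb] with x hx hy
    simp [add_mul, Finset.sum_add_distrib, hx, hy]
  smul_mem' := by
    intro c a ha
    rw [Set.mem_ofPred_eq] at *
    filter_upwards [ha] with x hx
    simp [mul_assoc, ← Finset.mul_sum, hx]

/-- Linear dependence of the `f j` almost everywhere on `s`. -/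
def DepOn {n : ℕ} (f : Fin n → ℝ → ℝ) (s : Set ℝ) : Prop :=
  ∃ a : Fin n → ℝ, a ≠ 0 ∧ ∀ᵐ x ∂(volume.restrict s), ∑ j, a j * f j x = 0

lemma annihilator_anti {n : ℕ} (f : Fin n → ℝ → ℝ) {s t : Set ℝ} (h : s ⊆ t) :
    annihilator f t ≤ annihilator f s :=
  fun _ ha => ae_restrict_of_ae_restrict_of_subset h ha

lemma DepOn.mono {n : ℕ} {f : Fin n → ℝ → ℝ} {s t : Set ℝ} (h : s ⊆ t) (ht : DepOn f t) :
    DepOn f s := by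
  obtain ⟨a, ha, h0⟩ := ht
  exact ⟨a, ha, annihilator_anti f h h0⟩

lemma depOn_of_null {n : ℕ} (hn : 1 ≤ n) (f : Fin n → ℝ → ℝ) {s : Set ℝ} (hs : volume s = 0) :
    DepOn f s := by
  refine ⟨fun _ => 1, fun h => one_ne_zero (congrFun h ⟨0, hn⟩), ?_⟩
  simp [Measure.restrict_eq_zero.2 hs]

/-- Dependence passes to increasing unions: the annihilators decrease and stabilize, and any
nonzero element of the stable one works on the whole union. -/
lemma DepOn.iUnion {n : ℕ} {f : Fin n → ℝ → ℝ} {s : ℕ → Set ℝ} (hs : Monotone s)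
    (h : ∀ k, DepOn f (s k)) : DepOn f (⋃ k, s k) := by
  obtain ⟨N, hN⟩ := IsArtinian.monotone_stabilizes
    (⟨fun k => OrderDual.toDual (annihilator f (s k)),
      fun _ _ hkl => annihilator_anti f (hs hkl)⟩ : ℕ →o (Submodule ℝ (Fin n → ℝ))ᵒᵈ)
  obtain ⟨a, ha, h0⟩ := h N
  refine ⟨a, ha, (ae_restrict_iUnion_iff _ _).2 fun k => ?_⟩
  rcases le_total N k with hk | hk
  · have he : annihilator f (s N) = annihilator f (s k) := hN k hk
    have hm : a ∈ annihilator f (s N) := h0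
    rw [he] at hm
    exact hm
  · exact annihilator_anti f (hs hk) h0

lemma depOn_Icc_of_forall_lt {n : ℕ} {f : Fin n → ℝ → ℝ} {c q : ℝ}
    (h : ∀ p < q, DepOn f (Set.Icc c p)) : DepOn f (Set.Icc c q) := by
  obtain ⟨u, hu, hlt, hlim⟩ := exists_seq_strictMono_tendsto q
  have hU : DepOn f (⋃ k, Set.Icc c (u k)) :=
    DepOn.iUnion (fun _ _ hkl => Set.Icc_subset_Icc_right (hu.monotone hkl)) fun k => h _ (hlt k)
  have hsub : Set.Ico c q ⊆ ⋃ k, Set.Icc c (u k) := by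
    intro x hx
    obtain ⟨k, hk⟩ := (hlim.eventually (lt_mem_nhds hx.2)).exists
    exact Set.mem_iUnion.2 ⟨k, hx.1, hk.le⟩
  obtain ⟨a, ha, h0⟩ := hU.mono hsub
  rw [Measure.restrict_congr_set Ico_ae_eq_Icc] at h0
  exact ⟨a, ha, h0⟩

lemma depOn_Icc_of_forall_gt {n : ℕ} {f : Fin n → ℝ → ℝ} {c q : ℝ}
    (h : ∀ p > q, DepOn f (Set.Icc p c)) : DepOn f (Set.Icc q c) := by
  obtain ⟨u, hu, hlt, hlim⟩ := exists_seq_strictAnti_tendsto q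
  have hU : DepOn f (⋃ k, Set.Icc (u k) c) :=
    DepOn.iUnion (fun _ _ hkl => Set.Icc_subset_Icc_left (hu.antitone hkl)) fun k => h _ (hlt k)
  have hsub : Set.Ioc q c ⊆ ⋃ k, Set.Icc (u k) c := by
    intro x hx
    obtain ⟨k, hk⟩ := (hlim.eventually (gt_mem_nhds hx.1)).exists
    exact Set.mem_iUnion.2 ⟨k, hk.le, hx.2⟩
  obtain ⟨a, ha, h0⟩ := hU.mono hsub
  rw [Measure.restrict_congr_set Ioc_ae_eq_Icc] at h0
  exact ⟨a, ha, h0⟩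

/-- Dichotomy: given `n` measurable functions on `[0,1]`, either (exclusively) there is a
`p ∈ (0,1)` such that they are linearly independent a.e. on `[0,p]` and on `[p,1]`, or
there is a `q ∈ [0,1]` such that they are linearly dependent a.e. on `[0,q]` and on
`[q,1]`. -/
theorem linIndep_linDep_dichotomy (n : ℕ) (hn : 1 ≤ n) (f : Fin n → ℝ → ℝ)
    (hf : ∀ j, Measurable (f j)) :
    Xor'
      (∃ p ∈ Set.Ioo (0:ℝ) 1,
        (∀ a : Fin n → ℝ,
          (∀ᵐ x ∂(volume.restrict (Set.Icc 0 p)), ∑ j, a j * f j x = 0) → a = 0) ∧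
        (∀ a : Fin n → ℝ,
          (∀ᵐ x ∂(volume.restrict (Set.Icc p 1)), ∑ j, a j * f j x = 0) → a = 0))
      (∃ q ∈ Set.Icc (0:ℝ) 1,
        (∃ a : Fin n → ℝ, a ≠ 0 ∧
          ∀ᵐ x ∂(volume.restrict (Set.Icc 0 q)), ∑ j, a j * f j x = 0) ∧
        (∃ b : Fin n → ℝ, b ≠ 0 ∧
          ∀ᵐ x ∂(volume.restrict (Set.Icc q 1)), ∑ j, b j * f j x = 0)) := by
  by_cases h1 : ∃ p ∈ Set.Ioo (0:ℝ) 1,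
        (∀ a : Fin n → ℝ,
          (∀ᵐ x ∂(volume.restrict (Set.Icc 0 p)), ∑ j, a j * f j x = 0) → a = 0) ∧
        (∀ a : Fin n → ℝ,
          (∀ᵐ x ∂(volume.restrict (Set.Icc p 1)), ∑ j, a j * f j x = 0) → a = 0)
  · refine Or.inl ⟨h1, ?_⟩
    obtain ⟨p, -, hl, hr⟩ := h1
    rintro ⟨q, -, hql, hqr⟩
    rcases le_total p q with hpq | hpq
    · obtain ⟨a, ha, h0⟩ := DepOn.mono (Set.Icc_subset_Icc_right hpq) hql
      exact ha (hl a h0)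
    · obtain ⟨a, ha, h0⟩ := DepOn.mono (Set.Icc_subset_Icc_left hpq) hqr
      exact ha (hr a h0)
  · refine Or.inr ⟨?_, h1⟩
    set D : Set ℝ := {t | t ∈ Set.Icc (0:ℝ) 1 ∧ DepOn f (Set.Icc 0 t)}
    have h0D : (0:ℝ) ∈ D := ⟨by simp, depOn_of_null hn f (by simp)⟩
    have hbdd : BddAbove D := ⟨1, fun t ht => ht.1.2⟩
    have hq0 : 0 ≤ sSup D := le_csSup hbdd h0D
    refine ⟨sSup D, ⟨hq0, csSup_le ⟨0, h0D⟩ fun t ht => ht.1.2⟩, ?_, ?_⟩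
    · refine depOn_Icc_of_forall_lt fun p hp => ?_
      obtain ⟨t, ht, hpt⟩ := exists_lt_of_lt_csSup ⟨0, h0D⟩ hp
      exact ht.2.mono (Set.Icc_subset_Icc_right hpt.le)
    · refine depOn_Icc_of_forall_gt fun p hp => ?_
      rcases le_or_gt 1 p with hp1 | hp1
      · exact depOn_of_null hn f (by simp [hp1])
      · by_contra hdep
        have hp0 : 0 < p := hq0.trans_lt hp
        refine h1 ⟨p, ⟨hp0, hp1⟩, fun a ha => ?_, fun a ha => ?_⟩
        · by_contra hne
          exact absurd (le_csSup hbdd ⟨⟨hp0.le, hp1.le⟩, a, hne, ha⟩) (not_le.2 hp)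
        · by_contra hne
          exact hdep ⟨a, hne, ha⟩
end

section
/- Let n ≥ 1 and let f_1, …, f_n be Lebesgue-measurable real-valued functions on [0,1]. Define L = sup{ x_0 ∈ [0,1] : there exists (a_1, …, a_n) ∈ ℝⁿ, (a_1, …, a_n) ≠ 0, with Σ_{j=1}^n a_j f_j(x) = 0 for almost every x ∈ [0, x_0] }, where the set is nonempty (it contains x_0 = 0). Then the supremum is attained: there exists a nonzero vector (a_1, …, a_n) ∈ ℝⁿ such that Σ_{j=1}^n a_j f_j(x) = 0 for almost every x ∈ [0, L]. -/
open MeasureTheory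

/-!
The relations valid a.e. on `[0, t]` form a subspace `relationSpace f t` of `ℝⁿ`, antitone in `t`.
Along a monotone sequence `u k` of admissible points tending to the supremum `L`, these subspaces
form a descending chain of nonzero subspaces of a finite-dimensional space, so the chain is
eventually constant. A nonzero vector of the stable subspace is a relation a.e. on every
`[0, u k]`, hence on `[0, L)`, which differs from `[0, L]` by a null set.
-/

/-- The space of coefficient vectors `a` with `∑ a_j f_j = 0` almost everywhere on `[0, t]`. -/
def relationSpace {n : ℕ} (f : Fin n → ℝ → ℝ) (t : ℝ) : Submodule ℝ (Fin n → ℝ) where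
  carrier := {a | ∀ᵐ x ∂(volume.restrict (Set.Icc 0 t)), ∑ j, a j * f j x = 0}
  zero_mem' := by simp
  add_mem' := by
    intro a b ha hb
    rw [Set.mem_ofPred_eq] at ha hb ⊢
    filter_upwards [ha, hb] with x hax hbx
    simp [add_mul, Finset.sum_add_distrib, hax, hbx]
  smul_mem' := by
    intro c a ha
    rw [Set.mem_ofPred_eq] at ha ⊢
    filter_upwards [ha] with x hax
    simp [mul_assoc, ← Finset.mul_sum, hax]

lemma mem_relationSpace {n : ℕ} {f : Fin n → ℝ → ℝ} {t : ℝ} {a : Fin n → ℝ} :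
    a ∈ relationSpace f t ↔
      ∀ᵐ x ∂(volume.restrict (Set.Icc 0 t)), ∑ j, a j * f j x = 0 := Iff.rfl

lemma relationSpace_antitone {n : ℕ} (f : Fin n → ℝ → ℝ) : Antitone (relationSpace f) :=
  fun _ _ hst _ ha => ae_restrict_of_ae_restrict_of_subset (Set.Icc_subset_Icc_right hst) ha

/-- The supremum `L` of the points `x₀ ∈ [0,1]` up to which some nontrivial linear relation
`∑ a_j f_j = 0` holds a.e. is attained: some nonzero relation holds a.e. on `[0, L]`. -/
theorem linear_relation_sup_attained (n : ℕ) (hn : 1 ≤ n) (f : Fin n → ℝ → ℝ)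
    (hf : ∀ j, Measurable (f j)) :
    ∃ a : Fin n → ℝ, a ≠ 0 ∧
      ∀ᵐ x ∂(volume.restrict (Set.Icc 0
          (sSup {x0 : ℝ | x0 ∈ Set.Icc (0:ℝ) 1 ∧ ∃ a : Fin n → ℝ, a ≠ 0 ∧
            ∀ᵐ x ∂(volume.restrict (Set.Icc 0 x0)), ∑ j, a j * f j x = 0}))),
        ∑ j, a j * f j x = 0 := by
  set S : Set ℝ := {x0 : ℝ | x0 ∈ Set.Icc (0:ℝ) 1 ∧ ∃ a : Fin n → ℝ, a ≠ 0 ∧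
    ∀ᵐ x ∂(volume.restrict (Set.Icc 0 x0)), ∑ j, a j * f j x = 0} with hS
  -- `[0, 0]` is a null set, so any nonzero vector is a relation there.
  have hne : S.Nonempty := by
    refine ⟨0, ⟨le_rfl, zero_le_one⟩, fun _ => 1, ?_, by simp⟩
    intro h
    exact one_ne_zero (congrFun h ⟨0, hn⟩)
  have hbdd : BddAbove S := ⟨1, fun x hx => hx.1.2⟩
  obtain ⟨u, hu_mono, hu_lim, huS⟩ := exists_seq_tendsto_sSup hne hbdd
  obtain ⟨N, hN⟩ := IsArtinian.monotone_stabilizes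
    (⟨fun k => OrderDual.toDual (relationSpace f (u k)),
      fun _ _ hkl => relationSpace_antitone f (hu_mono hkl)⟩ :
      ℕ →o (Submodule ℝ (Fin n → ℝ))ᵒᵈ)
  obtain ⟨-, a, ha0, ha⟩ := huS N
  have hmem : ∀ k, a ∈ relationSpace f (u k) := by
    intro k
    rcases le_total N k with hk | hk
    · have h : relationSpace f (u N) = relationSpace f (u k) := hN k hk
      exact h ▸ mem_relationSpace.2 ha
    · exact relationSpace_antitone f (hu_mono hk) ha
  refine ⟨a, ha0, ?_⟩
  rw [← Measure.restrict_congr_set (Ico_ae_eq_Icc (μ := volume))]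
  have hcover : Set.Ico 0 (sSup S) ⊆ ⋃ k, Set.Icc 0 (u k) := by
    intro x hx
    obtain ⟨k, hk⟩ := (hu_lim.eventually (lt_mem_nhds hx.2)).exists
    exact Set.mem_iUnion.2 ⟨k, hx.1, hk.le⟩
  exact ae_restrict_of_ae_restrict_of_subset hcover
    ((ae_restrict_iUnion_iff _ _).2 fun k => mem_relationSpace.1 (hmem k))
end
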